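/- arXiv:2305.15548 — 2 statements merged into one kernel-verified Lean document; each statement's English description precedes it below -/
import Mathlib

section
/- The complex-valued harmonic polynomial p(z) = 30*conj(z)^4 - 30z^2 - 15z - 2 (with analytic part -30z^2 - 15z - 2 and co-analytic part 30z^4) has exactly 10 zeros; that is, the set of complex numbers z with 30*conj(z)^4 = 30z^2 + 15z + 2 is finite of cardinality 10. -/
def qq (x : ℝ) : ℝ := 3840*x^6+1920*x^4+960*x^3-656*x^2-240*x-15

lemma qq_cont : Continuous qq := by unfold qq; fun_prop

lemma qq_deriv (x : ℝ) : deriv qq x = 23040*x^5+7680*x^3+2880*x^2-1312*x-240 := by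
  have h : HasDerivAt qq (3840*(6*x^5)+1920*(4*x^3)+960*(3*x^2)-656*(2*x)-240*1) x := by
    unfold qq
    have h6 := (hasDerivAt_pow 6 x).const_mul 3840
    have h4 := (hasDerivAt_pow 4 x).const_mul 1920
    have h3 := (hasDerivAt_pow 3 x).const_mul 960
    have h2 := (hasDerivAt_pow 2 x).const_mul 656
    have h1 := (hasDerivAt_id x).const_mul 240
    have := ((((h6.add h4).add h3).sub h2).sub h1).sub_const 15
    refine HasDerivAt.congr_deriv (f := fun x => 3840*x^6+1920*x^4+960*x^3-656*x^2-240*x-15) this ?_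
    norm_num
  rw [h.deriv]; ring

lemma qq_mono : StrictMonoOn qq (Set.Icc (-0.26) (-0.22)) := by
  apply strictMonoOn_of_deriv_pos (convex_Icc _ _) qq_cont.continuousOn
  intro x hx
  rw [interior_Icc] at hx
  obtain ⟨h1, h2⟩ := hx
  rw [qq_deriv]
  obtain ⟨t, rfl⟩ : ∃ t, x = -t := ⟨-x, by ring⟩
  have ht1 : t < 0.26 := by linarith
  have ht2 : 0.22 < t := by linarith
  have a2 : t^2 ≥ 0.22^2 := by gcongr
  have a3 : t^3 ≤ 0.26^3 := by gcongr
  have a5 : t^5 ≤ 0.26^5 := by gcongr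
  have : t^2 ≥ 0.44*t - 0.0484 := by nlinarith
  nlinarith

lemma qq_anti : StrictAntiOn qq (Set.Iic (-0.42)) := by
  apply strictAntiOn_of_deriv_neg (convex_Iic _) qq_cont.continuousOn
  intro x hx
  rw [interior_Iic] at hx
  rw [qq_deriv]
  obtain ⟨t, rfl⟩ : ∃ t, x = -(t+0.42) := ⟨-x-0.42, by ring⟩
  have ht : 0 < t := by simp at hx; linarith
  have : 23040*(t+0.42)^5+7680*(t+0.42)^3-2880*(t+0.42)^2-1312*(t+0.42)+240 > 0 := by
    ring_nf; positivity
  nlinarith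

lemma qq_neg (x : ℝ) (h1 : -0.42 ≤ x) (h2 : x ≤ -0.26) : qq x < 0 := by
  unfold qq
  obtain ⟨t, rfl⟩ : ∃ t, x = -t := ⟨-x, by ring⟩
  have ht1 : 0 ≤ t - 0.26 := by linarith
  have ht2 : 0 ≤ 0.42 - t := by linarith
  have h0 := mul_nonneg ht1 ht2
  nlinarith [mul_nonneg h0 ht1, mul_nonneg h0 ht2, mul_nonneg h0 h0, mul_nonneg (mul_nonneg h0 h0) h0,
    mul_nonneg (mul_nonneg h0 h0) ht1, mul_nonneg h0 (sq_nonneg t), mul_nonneg h0 (sq_nonneg (t^2))]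

lemma qq_pos_unique (x y : ℝ) (hx : 0 < x) (hxy : x < y) (h1 : qq x = 0) (h2 : qq y = 0) : False := by
  unfold qq at *
  have hy : 0 < y := hx.trans hxy
  have : (y - x) * (3840*x^2*y^2*(y+x)*(y^2+x^2) + 1920*x^2*y^2*(y+x)+960*x^2*y^2 + 240*x*y+15*(x+y)) = 0 := by
    linear_combination x^2*h2 - y^2*h1
  have h3 : 0 < y - x := by linarith
  have : 0 < (y - x) * (3840*x^2*y^2*(y+x)*(y^2+x^2) + 1920*x^2*y^2*(y+x)+960*x^2*y^2 + 240*x*y+15*(x+y)) := by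
    positivity
  linarith

lemma qq_roots : ∃ a b c : ℝ, a < -0.42 ∧ -0.26 < b ∧ b < -0.227 ∧ 0 < c ∧ qq a = 0 ∧ qq b = 0 ∧ qq c = 0 := by
  obtain ⟨a, ha, ha'⟩ := intermediate_value_Ioo' (a := (-0.5:ℝ)) (b := -0.42) (by norm_num) qq_cont.continuousOn
    (show (0:ℝ) ∈ _ by constructor <;> norm_num [qq])
  obtain ⟨b, hb, hb'⟩ := intermediate_value_Ioo (a := (-0.26:ℝ)) (b := -0.227) (by norm_num) qq_cont.continuousOn
    (show (0:ℝ) ∈ _ by constructor <;> norm_num [qq])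
  obtain ⟨c, hc, hc'⟩ := intermediate_value_Ioo (a := (0:ℝ)) (b := 1) (by norm_num) qq_cont.continuousOn
    (show (0:ℝ) ∈ _ by constructor <;> norm_num [qq])
  exact ⟨a, b, c, ha.2, hb.1, hb.2, hc.1, ha', hb', hc'⟩

lemma qq_all (a b c : ℝ) (ha : a < -0.42) (hb : -0.26 < b) (hb' : b < -0.227) (hc : 0 < c)
    (ea : qq a = 0) (eb : qq b = 0) (ec : qq c = 0) (x : ℝ) (hx : 0 < x ∨ x < -0.22) (ex : qq x = 0) :
    x = a ∨ x = b ∨ x = c := by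
  rcases hx with hx | hx
  · right; right
    rcases lt_trichotomy x c with h | h | h
    · exact (qq_pos_unique _ _ hx h ex ec).elim
    · exact h
    · exact (qq_pos_unique _ _ hc h ec ex).elim
  · rcases lt_or_ge x (-0.42) with h | h
    · left
      exact qq_anti.injOn h.le ha.le (ex.trans ea.symm)
    · rcases le_or_gt x (-0.26) with h' | h'
      · have := qq_neg x h h'
        linarith
      · right; left
        exact qq_mono.injOn ⟨h'.le, hx.le⟩ ⟨hb.le, by linarith⟩ (ex.trans eb.symm)

def ff (x : ℝ) : ℝ := 30*x^4-30*x^2-15*x-2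

lemma ff_cont : Continuous ff := by unfold ff; fun_prop

lemma ff_roots : ∃ a b c d : ℝ, a < b ∧ b < c ∧ c < d ∧ ff a = 0 ∧ ff b = 0 ∧ ff c = 0 ∧ ff d = 0 := by
  obtain ⟨a, ha, ha'⟩ := intermediate_value_Ioo' (a := (-1:ℝ)) (b := -0.5) (by norm_num) ff_cont.continuousOn
    (show (0:ℝ) ∈ _ by constructor <;> norm_num [ff])
  obtain ⟨b, hb, hb'⟩ := intermediate_value_Ioo (a := (-0.5:ℝ)) (b := -0.3) (by norm_num) ff_cont.continuousOn
    (show (0:ℝ) ∈ _ by constructor <;> norm_num [ff])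
  obtain ⟨c, hc, hc'⟩ := intermediate_value_Ioo' (a := (-0.3:ℝ)) (b := -0.2) (by norm_num) ff_cont.continuousOn
    (show (0:ℝ) ∈ _ by constructor <;> norm_num [ff])
  obtain ⟨d, hd, hd'⟩ := intermediate_value_Ioo (a := (0:ℝ)) (b := 2) (by norm_num) ff_cont.continuousOn
    (show (0:ℝ) ∈ _ by constructor <;> norm_num [ff])
  exact ⟨a, b, c, d, ha.2.trans hb.1, hb.2.trans hc.1, by linarith [hc.2, hd.1], ha', hb', hc', hd'⟩

open Polynomial in
lemma ff_all (a b c d : ℝ) (hab : a < b) (hbc : b < c) (hcd : c < d)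
    (ea : ff a = 0) (eb : ff b = 0) (ec : ff c = 0) (ed : ff d = 0) (x : ℝ) (ex : ff x = 0) :
    x = a ∨ x = b ∨ x = c ∨ x = d := by
  by_contra! hne
  obtain ⟨h1, h2, h3, h4⟩ := hne
  let P : ℝ[X] := C 30 * X^4 - C 30 * X^2 - C 15 * X - C 2
  have hd : P.natDegree ≤ 4 := by unfold P; compute_degree
  have he : ∀ y, P.eval y = ff y := by intro y; simp [P, ff]
  have h0 : P ≠ 0 := by
    intro h
    have := he 0
    rw [h] at this
    norm_num [ff] at this
  have hs : ({x, a, b, c, d} : Finset ℝ).val ⊆ P.roots := by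
    intro y hy
    rw [Polynomial.mem_roots h0, Polynomial.IsRoot, he]
    simp only [Finset.mem_val, Finset.mem_insert, Finset.mem_singleton] at hy
    rcases hy with rfl | rfl | rfl | rfl | rfl <;> assumption
  have := Polynomial.card_le_degree_of_subset_roots hs
  have hc : ({x, a, b, c, d} : Finset ℝ).card = 5 := by
    have e1 := hab.ne
    have e2 := hbc.ne
    have e3 := hcd.ne
    have e4 := (hab.trans hbc).ne
    have e5 := (hbc.trans hcd).ne
    have e6 := (hab.trans (hbc.trans hcd)).ne
    simp [Finset.card_insert_of_notMem, *]
  omega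

lemma eqn_iff (x y : ℝ) : (30 * (starRingEnd ℂ ⟨x, y⟩) ^ 4 = 30 * (⟨x, y⟩ : ℂ) ^ 2 + 15 * ⟨x, y⟩ + 2) ↔
    (30*(x^4-6*x^2*y^2+y^4) = 30*(x^2-y^2)+15*x+2 ∧ y * (8*x*(x^2-y^2)+4*x+1) = 0) := by
  rw [Complex.ext_iff]
  simp [pow_succ, -mul_eq_zero]
  constructor
  · rintro ⟨h1, h2⟩
    constructor
    · linear_combination h1
    · linear_combination -h2/15
  · rintro ⟨h1, h2⟩
    constructor
    · linear_combination h1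
    · linear_combination -15*h2

lemma eqn_iff' (x y : ℝ) (hy : y ≠ 0) :
    (30*(x^4-6*x^2*y^2+y^4) = 30*(x^2-y^2)+15*x+2 ∧ y * (8*x*(x^2-y^2)+4*x+1) = 0) ↔
    (qq x = 0 ∧ (8*x*(x^2-y^2)+4*x+1) = 0) := by
  simp only [mul_eq_zero, hy, false_or]
  refine and_congr_left fun h => ?_
  have hx : x ≠ 0 := by rintro rfl; norm_num at h
  have key : 32 * x^2 * (30*(x^4-6*x^2*y^2+y^4) - (30*(x^2-y^2)+15*x+2)) = - qq x := by
    unfold qq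
    linear_combination (120*x*(x^2-y^2) + (-60*x-15) - 120*x+480*x^3) * h
  constructor
  · intro h1
    rw [h1] at key
    linarith
  · intro h1
    rw [h1] at key
    have := (mul_eq_zero.mp (key.trans neg_zero)).resolve_left (by positivity)
    linarith

lemma valid (x y : ℝ) (hy : y ≠ 0) (h : 8*x*(x^2-y^2)+4*x+1 = 0) : 0 < x ∨ x < -0.22 := by
  by_contra! hh
  obtain ⟨h1, h2⟩ := hh
  obtain ⟨t, rfl⟩ : ∃ t, x = -t := ⟨-x, by ring⟩
  have : 0 ≤ t * y^2 := by have : 0 ≤ t := by linarith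
                           positivity
  have ht : t ≤ 0.22 := by linarith
  have ht0 : 0 ≤ t := by linarith
  have : t^3 ≤ 0.22^3 := by gcongr
  nlinarith

lemma exY (x : ℝ) (hx : 0 < x ∨ x < -0.227) : ∃ y : ℝ, 0 < y ∧ 8*x*(x^2-y^2)+4*x+1 = 0 := by
  have hx0 : x ≠ 0 := by rintro rfl; norm_num at hx
  have hp : 0 < (8*x^3+4*x+1)/(8*x) := by
    rcases hx with hx | hx
    · positivity
    · apply div_pos_of_neg_of_neg _ (by linarith)
      obtain ⟨t, rfl⟩ : ∃ t, x = -t := ⟨-x, by ring⟩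
      have ht : 0.227 ≤ t := by linarith
      have : 0.227^3 ≤ t^3 := by gcongr
      nlinarith
  refine ⟨√((8*x^3+4*x+1)/(8*x)), Real.sqrt_pos.mpr hp, ?_⟩
  rw [Real.sq_sqrt hp.le]
  field_simp
  ring

lemma y_eq (x y w : ℝ) (h : 8*x*(x^2-y^2)+4*x+1 = 0) (h' : 8*x*(x^2-w^2)+4*x+1 = 0) : y = w ∨ y = -w := by
  have hx : x ≠ 0 := by rintro rfl; norm_num at h
  have : x * (y^2 - w^2) = 0 := by linear_combination (h' - h)/8
  have := (mul_eq_zero.mp this).resolve_left hx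
  exact sq_eq_sq_iff_eq_or_eq_neg.mp (by linarith)

/-- the harmonic polynomial `p(z) = 30 conj(z)⁴ - 30z² - 15z - 2`
has exactly 10 zeros. -/
theorem stmt_11 :
    {z : ℂ | 30 * (starRingEnd ℂ z) ^ 4 = 30 * z ^ 2 + 15 * z + 2}.Finite ∧
      {z : ℂ | 30 * (starRingEnd ℂ z) ^ 4 = 30 * z ^ 2 + 15 * z + 2}.ncard = 10 := by
  obtain ⟨r, s, t, u, hrs, hst, htu, er, es, et, eu⟩ := ff_roots
  obtain ⟨a, b, c, ha, hb, hb', hc, ea, eb, ec⟩ := qq_roots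
  obtain ⟨ya, pa, hya⟩ := exY a (Or.inr (by linarith))
  obtain ⟨yb, pb, hyb⟩ := exY b (Or.inr (by linarith))
  obtain ⟨yc, pc, hyc⟩ := exY c (Or.inl hc)
  have key : {z : ℂ | 30 * (starRingEnd ℂ z) ^ 4 = 30 * z ^ 2 + 15 * z + 2} =
      (({⟨r,0⟩, ⟨s,0⟩, ⟨t,0⟩, ⟨u,0⟩, ⟨a,ya⟩, ⟨a,-ya⟩, ⟨b,yb⟩, ⟨b,-yb⟩, ⟨c,yc⟩, ⟨c,-yc⟩} : Finset ℂ) : Set ℂ) := by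
    ext ⟨x, y⟩
    rw [Set.mem_ofPred_eq, eqn_iff]
    simp only [Finset.coe_insert, Finset.coe_singleton, Set.mem_insert_iff, Set.mem_singleton_iff,
      Complex.mk.injEq]
    constructor
    · intro h
      by_cases hy : y = 0
      · subst hy
        have hf : ff x = 0 := by unfold ff; linear_combination h.1
        rcases ff_all r s t u hrs hst htu er es et eu x hf with h | h | h | h <;> simp [h]
      · rw [eqn_iff' x y hy] at h
        obtain ⟨h1, h2⟩ := h
        rcases qq_all a b c ha hb hb' hc ea eb ec x (valid x y hy h2) h1 with rfl | rfl | rfl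
        · rcases y_eq _ _ _ h2 hya with h | h <;> simp [h]
        · rcases y_eq _ _ _ h2 hyb with h | h <;> simp [h]
        · rcases y_eq _ _ _ h2 hyc with h | h <;> simp [h]
    · have F : ∀ v, ff v = 0 → (30*(v^4-6*v^2*(0:ℝ)^2+0^4) = 30*(v^2-0^2)+15*v+2 ∧
          0 * (8*v*(v^2-0^2)+4*v+1) = 0) := by
        intro v hv
        unfold ff at hv
        exact ⟨by linear_combination hv, by ring⟩
      rintro (⟨rfl, rfl⟩ | ⟨rfl, rfl⟩ | ⟨rfl, rfl⟩ | ⟨rfl, rfl⟩ | ⟨rfl, rfl⟩ | ⟨rfl, rfl⟩ | ⟨rfl, rfl⟩ |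
        ⟨rfl, rfl⟩ | ⟨rfl, rfl⟩ | ⟨rfl, rfl⟩)
      · exact F _ er
      · exact F _ es
      · exact F _ et
      · exact F _ eu
      · exact (eqn_iff' _ _ pa.ne').mpr ⟨ea, hya⟩
      · exact (eqn_iff' _ _ (neg_ne_zero.mpr pa.ne')).mpr ⟨ea, by rwa [neg_sq]⟩
      · exact (eqn_iff' _ _ pb.ne').mpr ⟨eb, hyb⟩
      · exact (eqn_iff' _ _ (neg_ne_zero.mpr pb.ne')).mpr ⟨eb, by rwa [neg_sq]⟩
      · exact (eqn_iff' _ _ pc.ne').mpr ⟨ec, hyc⟩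
      · exact (eqn_iff' _ _ (neg_ne_zero.mpr pc.ne')).mpr ⟨ec, by rwa [neg_sq]⟩
  rw [key]
  refine ⟨Finset.finite_toSet _, ?_⟩
  rw [Set.ncard_coe_finset]
  have e1 := hrs.ne
  have e2 := hst.ne
  have e3 := htu.ne
  have e4 := (hrs.trans hst).ne
  have e5 := (hst.trans htu).ne
  have e6 := (hrs.trans (hst.trans htu)).ne
  have f1 : a ≠ b := by intro h; linarith
  have f2 : a ≠ c := by intro h; linarith
  have f3 : b ≠ c := by intro h; linarith
  have ga := pa.ne
  have gb := pb.ne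
  have gc := pc.ne
  have na : ya ≠ -ya := by intro h; linarith
  have nb : yb ≠ -yb := by intro h; linarith
  have nc : yc ≠ -yc := by intro h; linarith
  have ka : (0:ℝ) ≠ -ya := by intro h; linarith
  have kb : (0:ℝ) ≠ -yb := by intro h; linarith
  have kc : (0:ℝ) ≠ -yc := by intro h; linarith
  clear key
  repeat rw [Finset.card_insert_of_notMem (by
    simp only [Finset.mem_insert, Finset.mem_singleton, Complex.mk.injEq]; tauto)]
  rw [Finset.card_singleton]
end

section
/- Let h be a complex polynomial of degree n ≥ 2. Then the equation conj(z) = h(z) has at most 3n - 2 complex solutions; that is, the set {z ∈ ℂ : h(z) - conj(z) = 0} is finite with cardinality at most 3n - 2. -/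
section KSaux
open Polynomial Filter Topology

lemma KS.inv_bound (p : ℂ[X]) (b : ℂ) (r R : ℝ) (hr : 0 < r)
    (hcrit : ∀ c, p.derivative.eval c = 0 → p.eval c ∉ Metric.ball (p.eval b) r)
    (hR : ∀ z, p.eval z ∈ Metric.ball (p.eval b) r → ‖z‖ ≤ R) :
    r ≤ 2 * R * ‖p.derivative.eval b‖ := by
  set B := Metric.ball (p.eval b) r with hB
  have hbB : p.eval b ∈ B := Metric.mem_ball_self hr
  have : ContractibleSpace B :=
    (convex_ball (p.eval b) r).contractibleSpace ⟨_, hbB⟩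
  have : LocallyPathConnectedSpace B := Metric.isOpen_ball.locallyPathConnectedSpace
  have cov := p.isCoveringMapOn_eval
  obtain ⟨s, ⟨hs0, hs⟩, -⟩ := cov.existsUnique_continuousMap_lifts (A := B)
    ⟨Subtype.val, by fun_prop⟩ (a₀ := ⟨_, hbB⟩) (e₀ := b) rfl (by
      rintro ⟨y, hy⟩ ⟨c, hc, hcy⟩
      simp only [ContinuousMap.coe_mk] at hcy
      exact hcrit c hc (hcy ▸ hy))
  classical
  let g : ℂ → ℂ := fun y => if hy : y ∈ B then s ⟨y, hy⟩ else 0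
  have hg : ∀ y ∈ B, p.eval (g y) = y := by
    intro y hy
    have := congrFun hs ⟨y, hy⟩
    simpa [g, hy] using this
  have hgc : ∀ y ∈ B, ContinuousAt g y := by
    intro y hy
    have : ContinuousOn g B := by
      rw [continuousOn_iff_continuous_domRestrict]
      convert s.continuous using 1
      ext ⟨z, hz⟩
      simp [g, hz]
    exact this.continuousAt (Metric.isOpen_ball.mem_nhds hy)
  have hne : ∀ y ∈ B, p.derivative.eval (g y) ≠ 0 := by
    intro y hy h0
    exact hcrit _ h0 (by rw [hg y hy]; exact hy)
  have hgd : ∀ y ∈ B, HasDerivAt g (p.derivative.eval (g y))⁻¹ y := by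
    intro y hy
    refine HasDerivAt.of_local_left_inverse (hgc y hy) (p.hasDerivAt (g y)) (hne y hy) ?_
    filter_upwards [Metric.isOpen_ball.mem_nhds hy] with w hw using hg w hw
  have hgb : g (p.eval b) = b := by simp [g, hbB, hs0]
  have hgR : ∀ y ∈ B, ‖g y‖ ≤ R := fun y hy => hR _ (by rw [hg y hy]; exact hy)
  have key := Complex.norm_deriv_le_div_of_mapsTo_ball (f := g) (c := p.eval b) (R₁ := r)
    (R₂ := 2 * R) (fun y hy => (hgd y hy).differentiableAt.differentiableWithinAt) (by
      intro y hy
      rw [mem_closedBall_iff_norm]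
      calc ‖g y - g (p.eval b)‖ ≤ ‖g y‖ + ‖g (p.eval b)‖ := norm_sub_le _ _
        _ ≤ R + R := add_le_add (hgR y hy) (hgR _ hbB)
        _ = 2 * R := by ring) hr
  rw [(hgd _ hbB).deriv, hgb, norm_inv] at key
  have h1 : 0 < ‖p.derivative.eval b‖ := by
    have := hne _ hbB
    rw [hgb] at this
    exact norm_pos_iff.2 this
  rw [le_div_iff₀ hr, inv_mul_le_iff₀ h1] at key
  linarith

lemma KS.escape (F : ℂ[X]) (hF : 2 ≤ F.natDegree) : ∃ R : ℝ, ∀ z, R ≤ ‖z‖ → ‖z‖ ≤ ‖F.eval z‖ := by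
  have h1 : 0 < F.divX.degree := by
    rw [← natDegree_pos_iff_degree_pos, natDegree_divX_eq_natDegree_tsub_one]; omega
  have h2 := F.divX.tendsto_norm_atTop h1 (tendsto_norm_cobounded_atTop (E := ℂ))
  have h3 := h2.eventually_ge_atTop 2
  rw [Filter.eventually_iff, ← comap_norm_atTop, mem_comap] at h3
  obtain ⟨t, ht, hts⟩ := h3
  obtain ⟨R, hR⟩ := mem_atTop_sets.1 ht
  refine ⟨max R ‖F.coeff 0‖, fun z hz => ?_⟩
  have hz1 : 2 ≤ ‖F.divX.eval z‖ := hts (hR _ (le_trans (le_max_left _ _) hz))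
  have hz2 := le_trans (le_max_right _ _) hz
  have h4 : F.eval z = F.divX.eval z * z + F.coeff 0 := by
    conv_lhs => rw [← divX_mul_X_add F]
    simp
  have h5 := norm_sub_le_norm_add (F.divX.eval z * z) (F.coeff 0)
  rw [← h4, norm_mul] at h5
  nlinarith [norm_nonneg z]

lemma KS.iter_bound (F : ℂ[X]) (hF : 2 ≤ F.natDegree) (a b : ℂ) (r : ℕ → ℝ)
    (hr : ∀ k, 0 < r k)
    (hbasin : ∀ k, ∀ y ∈ Metric.ball ((fun x => F.eval x)^[k] b) (r k),
      Tendsto (fun j => (fun x => F.eval x)^[j] y) atTop (𝓝 a))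
    (hno : ∀ c, F.derivative.eval c = 0 →
      ¬ Tendsto (fun j => (fun x => F.eval x)^[j] c) atTop (𝓝 a)) :
    ∃ M : ℝ, ∀ k, r k ≤ M * ∏ j ∈ Finset.range k, ‖F.derivative.eval ((fun x => F.eval x)^[j] b)‖ := by
  obtain ⟨R, hR⟩ := KS.escape F hF
  have hev : ∀ k z, (F.comp^[k] X).eval z = (fun x => F.eval x)^[k] z := by
    intro k z; rw [iterate_comp_eval]; simp
  have hder : ∀ k z, ((F.comp^[k] X).derivative).eval z =
      ∏ j ∈ Finset.range k, F.derivative.eval ((fun x => F.eval x)^[j] z) := by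
    intro k z
    induction k with
    | zero => simp
    | succ k ih =>
      rw [Function.iterate_succ_apply', derivative_comp, eval_mul, eval_comp, ih, hev,
        Finset.prod_range_succ, mul_comm]
  have hshift : ∀ k z, Tendsto (fun j => (fun x => F.eval x)^[j] ((fun x => F.eval x)^[k] z)) atTop (𝓝 a) →
      Tendsto (fun j => (fun x => F.eval x)^[j] z) atTop (𝓝 a) := by
    intro k z h
    simp_rw [← Function.iterate_add_apply] at h
    exact (tendsto_add_atTop_iff_nat k).1 h
  refine ⟨2 * max R ‖a‖, fun k => ?_⟩
  have := KS.inv_bound (F.comp^[k] X) b (r k) (max R ‖a‖) (hr k) ?_ ?_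
  · rwa [hder, norm_prod] at this
  · intro c hc hcb
    rw [hev, hev] at hcb
    have hc1 := hshift _ _ (hbasin k _ hcb)
    rw [hder, Finset.prod_eq_zero_iff] at hc
    obtain ⟨j, -, hj⟩ := hc
    refine hno _ hj ?_
    simp_rw [← Function.iterate_add_apply]
    exact (tendsto_add_atTop_iff_nat j).2 hc1
  · intro z hz
    rw [hev, hev] at hz
    have hz1 := hshift _ _ (hbasin k _ hz)
    by_contra hcon
    push Not at hcon
    have h1 : ∀ j, ‖z‖ ≤ ‖(fun x => F.eval x)^[j] z‖ := by
      intro j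
      induction j with
      | zero => simp
      | succ j ih =>
        rw [Function.iterate_succ_apply']
        exact ih.trans (hR _ ((le_max_left _ _).trans (hcon.le.trans ih)))
    have h2 := ge_of_tendsto' hz1.norm h1
    have := le_max_right R ‖a‖
    linarith

lemma KS.attr (F : ℂ[X]) (hF : 2 ≤ F.natDegree) (a : ℂ) (ha : F.eval a = a)
    (hl : ‖F.derivative.eval a‖ < 1) :
    ∃ c, F.derivative.eval c = 0 ∧ Tendsto (fun j => (fun x => F.eval x)^[j] c) atTop (𝓝 a) := by
  by_contra hcon
  push Not at hcon
  obtain ⟨q, hq1, hq2⟩ := exists_between hl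
  have hq0 : 0 ≤ q := (norm_nonneg _).trans hq1.le
  have h1 := (F.hasDerivAt a).isLittleO
  have h2 := h1.def (sub_pos.2 hq1)
  obtain ⟨r, hr, hball⟩ := Metric.eventually_nhds_iff_ball.1 h2
  have hstep : ∀ x ∈ Metric.ball a r, ‖F.eval x - a‖ ≤ q * ‖x - a‖ := by
    intro x hx
    have := hball x hx
    rw [ha] at this
    calc ‖F.eval x - a‖ = ‖(F.eval x - a - (x - a) • F.derivative.eval a) + (x - a) • F.derivative.eval a‖ := by
          congr 1; ring
      _ ≤ _ := norm_add_le _ _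
      _ ≤ (q - ‖F.derivative.eval a‖) * ‖x - a‖ + ‖x - a‖ * ‖F.derivative.eval a‖ := by
          rw [norm_smul]; gcongr
      _ = q * ‖x - a‖ := by ring
  have hiter : ∀ x ∈ Metric.ball a r, ∀ j, ‖(fun x => F.eval x)^[j] x - a‖ ≤ q ^ j * ‖x - a‖ := by
    intro x hx j
    rw [mem_ball_iff_norm] at hx
    induction j with
    | zero => simp
    | succ j ih =>
      rw [Function.iterate_succ_apply']
      refine (hstep _ ?_).trans ?_
      · rw [mem_ball_iff_norm]
        refine ih.trans_lt (lt_of_le_of_lt ?_ hx)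
        exact mul_le_of_le_one_left (norm_nonneg _) (pow_le_one₀ hq0 hq2.le)
      · rw [pow_succ', mul_assoc]; gcongr
  have hfix : ∀ k, (fun x => F.eval x)^[k] a = a := fun k => Function.iterate_fixed ha k
  obtain ⟨M, hM⟩ := KS.iter_bound F hF a a (fun _ => r) (fun _ => hr) (by
    intro k y hy
    rw [hfix] at hy
    rw [tendsto_iff_norm_sub_tendsto_zero]
    refine squeeze_zero (fun _ => norm_nonneg _) (hiter y hy) ?_
    simpa using (tendsto_pow_atTop_nhds_zero_of_lt_one hq0 hq2).mul_const ‖y - a‖) hcon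
  simp only [hfix, Finset.prod_const, Finset.card_range] at hM
  have h3 : Tendsto (fun k : ℕ => M * ‖F.derivative.eval a‖ ^ k) atTop (𝓝 (M * 0)) :=
    (tendsto_pow_atTop_nhds_zero_of_lt_one (norm_nonneg _) hl).const_mul M
  have := ge_of_tendsto' h3 hM
  simp at this
  linarith

lemma KS.cplx (u w : ℂ) (hw : ‖w - 1‖ ≤ 1 / 10) (hu : 7 ≤ ‖u‖) (him : |u.im| ≤ u.re) :
    ‖1 - w / u‖ ≤ 1 - 1 / (2 * ‖u‖) := by
  have hu0 : 0 < ‖u‖ := by linarith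
  have hune : u ≠ 0 := norm_pos_iff.1 hu0
  have e1 : (1 - w / u) = (u - w) / u := by field_simp
  have hre : 0 ≤ u.re := (abs_nonneg _).trans him
  have hsq : ‖u‖ ^ 2 = u.re ^ 2 + u.im ^ 2 := by
    rw [← Complex.normSq_eq_norm_sq, Complex.normSq_apply]; ring
  have hsq1 : ‖u - 1‖ ^ 2 = (u.re - 1) ^ 2 + u.im ^ 2 := by
    rw [← Complex.normSq_eq_norm_sq, Complex.normSq_apply]; simp; ring
  have him2 : u.im ^ 2 ≤ u.re ^ 2 := by
    rw [← sq_abs u.im]; gcongr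
  have h7 : 0.7 * ‖u‖ ≤ u.re := by
    refine (pow_le_pow_iff_left₀ (by positivity) hre two_ne_zero).1 ?_
    nlinarith
  have h8 : ‖u - 1‖ ≤ ‖u‖ - 0.6 := by
    refine (pow_le_pow_iff_left₀ (norm_nonneg _) (by linarith) two_ne_zero).1 ?_
    nlinarith
  have h9 : ‖u - w‖ ≤ ‖u‖ - 1 / 2 := by
    have : ‖u - w‖ ≤ ‖u - 1‖ + ‖w - 1‖ := by
      rw [show u - w = (u - 1) - (w - 1) by ring]; exact norm_sub_le _ _
    norm_num at *
    linarith
  rw [e1, norm_div, div_le_iff₀ hu0]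
  have : (1 - 1 / (2 * ‖u‖)) * ‖u‖ = ‖u‖ - 1 / 2 := by field_simp
  rw [this]; exact h9

lemma KS.para_local (G : ℂ[X]) (a : ℂ) (d : ℕ) (hd : 1 ≤ d) (hG : G.eval a ≠ 0)
    (F : ℂ[X]) (hFG : F = X + (X - C a) ^ (d + 1) * G) (u : ℂ → ℂ)
    (hu : ∀ z, u z = -1 / (d * G.eval a * (z - a) ^ d)) :
    ∃ δ > 0, ∀ z, 0 < ‖z - a‖ → ‖z - a‖ < δ →
      ‖u (F.eval z) - u z - 1‖ ≤ 1 / 4 ∧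
      1 + (z - a) ^ d * G.eval z ≠ 0 ∧
      F.eval z - a = (z - a) * (1 + (z - a) ^ d * G.eval z) ∧
      (7 ≤ ‖u z‖ → |(u z).im| ≤ (u z).re → ‖F.derivative.eval z‖ ≤
        ‖1 + (z - a) ^ d * G.eval z‖ * (1 - 1 / (2 * ‖u z‖))) := by
  have hd0 : (d : ℂ) ≠ 0 := by norm_cast; omega
  set s : ℂ → ℂ := fun z => (z - a) ^ d * G.eval z with hs
  have hsa : s a = 0 := by simp [hs]; omega
  have hsc : Continuous s := by simp only [hs]; fun_prop
  have hFe : ∀ z, F.eval z - a = (z - a) * (1 + s z) := by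
    intro z; rw [hFG]; simp [hs]; ring
  -- auxiliary continuous functions
  set φ : ℂ → ℂ := fun z => G.eval z / (d * G.eval a) *
    ((∑ i ∈ Finset.range d, (1 + s z) ^ i) / (1 + s z) ^ d) with hφ
  set ω : ℂ → ℂ := fun z => (d * G.eval z + (z - a) * G.derivative.eval z) /
    (d * G.eval a * (1 + s z)) with hω
  have hφc : ContinuousAt φ a := by
    simp only [hφ]
    refine ContinuousAt.mul (by fun_prop) (ContinuousAt.div ?_ ?_ ?_)
    · fun_prop
    · fun_prop
    · simp [hsa]
  have hωc : ContinuousAt ω a := by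
    simp only [hω]
    refine ContinuousAt.div (by fun_prop) (by fun_prop) ?_
    simp [hsa, hd0, hG]
  have hφa : φ a = 1 := by
    simp only [hφ, hsa]; simp; field_simp
  have hωa : ω a = 1 := by
    simp only [hω, hsa]; simp [hd0, hG]
  have ev1 : ∀ᶠ z in 𝓝 a, ‖φ z - 1‖ < 1 / 4 := by
    have := Metric.tendsto_nhds.1 hφc.tendsto (1/4) (by norm_num)
    simpa [hφa, dist_eq_norm] using this
  have ev2 : ∀ᶠ z in 𝓝 a, ‖ω z - 1‖ < 1 / 10 := by
    have := Metric.tendsto_nhds.1 hωc.tendsto (1/10) (by norm_num)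
    simpa [hωa, dist_eq_norm] using this
  have ev3 : ∀ᶠ z in 𝓝 a, 1 + s z ≠ 0 := by
    have : ContinuousAt (fun z => 1 + s z) a := by fun_prop
    exact this.eventually_ne (by simp [hsa])
  obtain ⟨δ, hδ, hball⟩ := Metric.eventually_nhds_iff_ball.1 (ev1.and (ev2.and ev3))
  refine ⟨δ, hδ, fun z hz0 hz => ?_⟩
  obtain ⟨h1, h2, h3⟩ := hball z (mem_ball_iff_norm.2 hz)
  have hza : z - a ≠ 0 := norm_pos_iff.1 hz0
  refine ⟨?_, h3, hFe z, ?_⟩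
  · have : u (F.eval z) - u z = φ z := by
      rw [hu, hu, hFe]
      have hgs := geom_sum_mul (1 + s z) d
      have : (∑ i ∈ Finset.range d, (1 + s z) ^ i) * ((z - a) ^ d * G.eval z) = (1 + s z) ^ d - 1 := by
        rw [← hgs]; simp only [hs]; ring
      simp only [hφ]
      rw [mul_pow]
      field_simp
      linear_combination (-1 : ℂ) * this
    rw [this]; exact h1.le
  · intro hu7 him
    have hk := KS.cplx (u z) (ω z) h2.le hu7 him
    have : F.derivative.eval z = (1 + s z) * (1 - ω z / u z) := by
      rw [hu]
      have e : F.derivative.eval z = 1 + (d + 1) * s z + (z - a) ^ (d + 1) * G.derivative.eval z := by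
        rw [hFG]
        simp [hs, derivative_pow]
        ring
      rw [e]
      have h3' : 1 + s z ≠ 0 := h3
      simp only [hω]
      field_simp
      simp only [hs]
      ring
    rw [this, norm_mul]
    gcongr

lemma KS.para (F : ℂ[X]) (hF : 2 ≤ F.natDegree) (a : ℂ) (ha : F.eval a = a)
    (hl : F.derivative.eval a = 1) :
    ∃ c, F.derivative.eval c = 0 ∧ Tendsto (fun j => (fun x => F.eval x)^[j] c) atTop (𝓝 a) := by
  -- factorisation
  have hFX : F - X ≠ 0 := by
    intro h
    rw [sub_eq_zero.1 h] at hF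
    simp at hF
  obtain ⟨G, hG1, hG2⟩ := exists_eq_pow_rootMultiplicity_mul_and_not_dvd (F - X) hFX a
  have hGa : G.eval a ≠ 0 := fun h => hG2 (dvd_iff_isRoot.2 h)
  have hm : 2 ≤ rootMultiplicity a (F - X) := by
    rw [Nat.succ_le_iff, one_lt_rootMultiplicity_iff_isRoot hFX]
    constructor
    · simp [IsRoot, ha]
    · simp [IsRoot, hl]
  obtain ⟨d, hd1, hdm⟩ : ∃ d, 1 ≤ d ∧ rootMultiplicity a (F - X) = d + 1 :=
    ⟨rootMultiplicity a (F - X) - 1, by omega, by omega⟩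
  rw [hdm] at hG1
  have hFG : F = X + (X - C a) ^ (d + 1) * G := by rw [← hG1]; ring
  have hd0 : (d : ℂ) ≠ 0 := by norm_cast; omega
  have hdne : d ≠ 0 := by omega
  set A : ℂ := d * G.eval a with hA
  have hA0 : A ≠ 0 := mul_ne_zero hd0 hGa
  have hAn : 0 < ‖A‖ := norm_pos_iff.2 hA0
  set u : ℂ → ℂ := fun z => -1 / (A * (z - a) ^ d) with hu
  obtain ⟨δ, hδ, hloc⟩ := KS.para_local G a d hd1 hGa F hFG u (fun z => rfl)
  have hun : ∀ z, ‖u z‖ = 1 / (‖A‖ * ‖z - a‖ ^ d) := by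
    intro z; simp [hu]
  set K : ℝ := max 7 (1 / (‖A‖ * δ ^ d)) with hK
  have hK7 : 7 ≤ K := le_max_left _ _
  -- large `u` means close to `a`
  have hnear : ∀ z, K < ‖u z‖ → 0 < ‖z - a‖ ∧ ‖z - a‖ < δ := by
    intro z hz
    have h0 : 0 < ‖z - a‖ := by
      rw [norm_pos_iff]
      intro h
      have : u z = 0 := by simp [hu, h, hdne]
      rw [this] at hz
      simp at hz
      linarith
    refine ⟨h0, ?_⟩
    by_contra hcon
    push Not at hcon
    have h1 : 1 / (‖A‖ * δ ^ d) < ‖u z‖ := lt_of_le_of_lt (le_max_right _ _) hz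
    rw [hun] at h1
    have : 1 / (‖A‖ * ‖z - a‖ ^ d) ≤ 1 / (‖A‖ * δ ^ d) := by gcongr
    linarith
  let f : ℂ → ℂ := fun x => F.eval x
  let Ω : Set ℂ := {z | K < (u z).re ∧ |(u z).im| < (u z).re}
  have hΩK : ∀ z ∈ Ω, K < ‖u z‖ := fun z hz => hz.1.trans_le (Complex.re_le_norm _)
  have hstep : ∀ z ∈ Ω, (u z).re + 3 / 4 ≤ (u (f z)).re ∧ |(u (f z)).im| ≤ |(u z).im| + 1 / 4 ∧
      ‖u (f z)‖ ≤ ‖u z‖ + 2 := by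
    intro z hz
    obtain ⟨h1, h2⟩ := hnear z (hΩK z hz)
    obtain ⟨h3, -⟩ := hloc z h1 h2
    have h3' : ‖u (f z) - u z - 1‖ ≤ 1 / 4 := h3
    have hre := (Complex.abs_re_le_norm _).trans h3'
    have him := (Complex.abs_im_le_norm _).trans h3'
    simp only [Complex.sub_re, Complex.sub_im, Complex.one_re, Complex.one_im] at hre him
    rw [abs_le] at hre
    refine ⟨by linarith, ?_, ?_⟩
    · have := abs_sub_abs_le_abs_sub (u (f z)).im (u z).im
      simp only [sub_zero] at him
      linarith
    · have : ‖u (f z)‖ ≤ ‖u (f z) - u z - 1‖ + ‖u z + 1‖ := by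
        have := norm_add_le (u (f z) - u z - 1) (u z + 1)
        rwa [show u (f z) - u z - 1 + (u z + 1) = u (f z) by ring] at this
      have h5 := norm_add_le (u z) 1
      rw [norm_one] at h5
      linarith
  have hinv : ∀ z ∈ Ω, f z ∈ Ω := by
    intro z hz
    obtain ⟨h1, h2, -⟩ := hstep z hz
    have := hz.1
    have := hz.2
    exact ⟨by linarith, by linarith⟩
  have hinvj : ∀ z ∈ Ω, ∀ j, f^[j] z ∈ Ω := by
    intro z hz j
    induction j with
    | zero => exact hz
    | succ j ih => rw [Function.iterate_succ_apply']; exact hinv _ ih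
  have hrej : ∀ z ∈ Ω, ∀ j : ℕ, (u z).re + 3 / 4 * j ≤ (u (f^[j] z)).re ∧
      |(u (f^[j] z)).im| ≤ |(u z).im| + 1 / 4 * j ∧ ‖u (f^[j] z)‖ ≤ ‖u z‖ + 2 * j := by
    intro z hz j
    induction j with
    | zero => simp
    | succ j ih =>
      rw [Function.iterate_succ_apply']
      obtain ⟨h1, h2, h3⟩ := hstep _ (hinvj z hz j)
      push_cast
      refine ⟨by linarith, by linarith, by linarith⟩
  have hconv : ∀ z ∈ Ω, Tendsto (fun j => f^[j] z) atTop (𝓝 a) := by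
    intro z hz
    have h1 : Tendsto (fun j : ℕ => ‖u (f^[j] z)‖) atTop atTop := by
      have h2 : Tendsto (fun j : ℕ => (u z).re + 3 / 4 * (j : ℝ)) atTop atTop :=
        tendsto_atTop_add_const_left _ _
          (Tendsto.const_mul_atTop (by norm_num) tendsto_natCast_atTop_atTop)
      exact tendsto_atTop_mono (fun j => (hrej z hz j).1.trans (Complex.re_le_norm _)) h2
    have h3 : Tendsto (fun j : ℕ => ‖f^[j] z - a‖ ^ d) atTop (𝓝 0) := by
      have h4 : Tendsto (fun j : ℕ => ‖A‖⁻¹ * ‖u (f^[j] z)‖⁻¹) atTop (𝓝 (‖A‖⁻¹ * 0)) :=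
        (tendsto_inv_atTop_zero.comp h1).const_mul _
      rw [mul_zero] at h4
      refine h4.congr fun j => ?_
      rw [hun]; field_simp
    rw [tendsto_iff_norm_sub_tendsto_zero]
    rw [Metric.tendsto_nhds] at h3 ⊢
    intro ε hε
    filter_upwards [h3 (ε ^ d) (by positivity)] with j hj
    simp only [dist_zero_right, norm_pow, norm_norm] at hj ⊢
    exact lt_of_pow_lt_pow_left₀ d hε.le hj
  -- base point
  obtain ⟨x0, hx0⟩ := IsAlgClosed.exists_pow_nat_eq (-1 / (A * (2 * K : ℝ))) (by omega : 0 < d)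
  set b : ℂ := a + x0 with hb
  have hKc : ((2 * K : ℝ) : ℂ) ≠ 0 := by
    rw [Complex.ofReal_ne_zero]; positivity
  have hub : u b = (2 * K : ℝ) := by
    simp only [hu, hb, add_sub_cancel_left, hx0]
    field_simp
  have hbΩ : b ∈ Ω := by
    refine ⟨?_, ?_⟩
    · rw [hub, Complex.ofReal_re]; linarith
    · rw [hub, Complex.ofReal_re, Complex.ofReal_im, abs_zero]; linarith
  have hubn : ‖u b‖ = 2 * K := by rw [hub, Complex.norm_real, Real.norm_of_nonneg (by linarith)]
  -- distortion of `u` on small balls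
  obtain ⟨c, hc0, hc⟩ : ∃ c > 0, ∀ η : ℂ, ‖η‖ < c → ‖((1 + η) ^ d)⁻¹ - 1‖ < 1 / 10 := by
    have h1 : ContinuousAt (fun η : ℂ => ((1 + η) ^ d)⁻¹) 0 := by
      refine ContinuousAt.inv₀ (by fun_prop) (by simp)
    have h2 := Metric.tendsto_nhds.1 h1.tendsto (1 / 10) (by norm_num)
    obtain ⟨c, hc0, hc⟩ := Metric.eventually_nhds_iff_ball.1 h2
    refine ⟨c, hc0, fun η hη => ?_⟩
    have := hc η (by simpa using hη)
    simpa [dist_eq_norm] using this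
  have hxpos : ∀ k, 0 < ‖f^[k] b - a‖ := fun k => (hnear _ (hΩK _ (hinvj b hbΩ k))).1
  have hballΩ : ∀ k, ∀ y ∈ Metric.ball (f^[k] b) (c * ‖f^[k] b - a‖), y ∈ Ω := by
    intro k y hy
    set x := f^[k] b with hx
    have hxne : x - a ≠ 0 := norm_pos_iff.1 (hxpos k)
    rw [mem_ball_iff_norm] at hy
    have h1 := hc ((y - x) / (x - a)) (by rwa [norm_div, div_lt_iff₀ (hxpos k)])
    have h2 : u y - u x = u x * (((1 + (y - x) / (x - a)) ^ d)⁻¹ - 1) := by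
      have : 1 + (y - x) / (x - a) = (y - a) / (x - a) := by field_simp; ring
      rw [this, div_pow, inv_div]
      simp only [hu]
      rw [mul_sub, mul_one]
      congr 1
      by_cases hya : y - a = 0
      · simp [hya, hdne]
      · field_simp
    have h3 : ‖u y - u x‖ ≤ ‖u x‖ / 10 := by
      rw [h2, norm_mul]
      have := norm_nonneg (u x)
      nlinarith
    obtain ⟨h4, h5, -⟩ := hrej b hbΩ k
    rw [← hx, hub, Complex.ofReal_re] at h4
    rw [← hx, hub, Complex.ofReal_im, abs_zero] at h5
    have h6 := Complex.norm_le_abs_re_add_abs_im (u x)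
    have hk0 : (0 : ℝ) ≤ k := Nat.cast_nonneg k
    rw [abs_of_nonneg (by linarith : 0 ≤ (u x).re)] at h6
    have h7 := (Complex.abs_re_le_norm _).trans h3
    have h8 := (Complex.abs_im_le_norm _).trans h3
    simp only [Complex.sub_re, Complex.sub_im] at h7 h8
    rw [abs_le] at h7
    have h9 := abs_sub_abs_le_abs_sub (u y).im (u x).im
    exact ⟨by linarith, by linarith⟩
  by_contra hcon
  push Not at hcon
  obtain ⟨M, hM⟩ := KS.iter_bound F hF a b (fun k => c * ‖f^[k] b - a‖)
    (fun k => mul_pos hc0 (hxpos k)) (fun k y hy => hconv y (hballΩ k y hy)) hcon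
  -- growth estimate
  set S : ℕ → ℂ := fun j => 1 + (f^[j] b - a) ^ d * G.eval (f^[j] b) with hS
  have hlocj : ∀ j, S j ≠ 0 ∧ f^[j+1] b - a = (f^[j] b - a) * S j ∧
      ‖F.derivative.eval (f^[j] b)‖ ≤ ‖S j‖ * (1 - 1 / (2 * ‖u (f^[j] b)‖)) := by
    intro j
    have hz := hinvj b hbΩ j
    obtain ⟨h1, h2⟩ := hnear _ (hΩK _ hz)
    obtain ⟨-, h3, h4, h5⟩ := hloc _ h1 h2
    refine ⟨h3, ?_, h5 (hK7.trans (hΩK _ hz).le) hz.2.le⟩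
    rw [Function.iterate_succ_apply']; exact h4
  have hxk : ∀ k, ‖f^[k] b - a‖ = ‖b - a‖ * ∏ j ∈ Finset.range k, ‖S j‖ := by
    intro k
    induction k with
    | zero => simp
    | succ k ih =>
      rw [(hlocj k).2.1, norm_mul, ih, Finset.prod_range_succ]; ring
  have hprodS : ∀ k, 0 < ∏ j ∈ Finset.range k, ‖S j‖ :=
    fun k => Finset.prod_pos fun j _ => norm_pos_iff.2 (hlocj j).1
  have hM0 : 0 ≤ M := by
    have := (hM 0)
    simp at this
    exact (mul_nonneg hc0.le (norm_nonneg _)).trans this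
  have hfac : ∀ j : ℕ, 1 - 1 / (2 * ‖u (f^[j] b)‖) ≤ Real.exp (- (1 / (4 * K) * (1 / ((j : ℝ) + 1)))) := by
    intro j
    have h1 := (hrej b hbΩ j).2.2
    rw [hubn] at h1
    have h2 := Real.add_one_le_exp (- (1 / (4 * K) * (1 / ((j : ℝ) + 1))))
    have h3 : 1 / (4 * K) * (1 / ((j : ℝ) + 1)) ≤ 1 / (2 * ‖u (f^[j] b)‖) := by
      rw [← one_div_mul_one_div_rev, one_div_mul_one_div_rev, one_div_mul_one_div_rev]
      have h4 : 0 < ‖u (f^[j] b)‖ := by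
        have := hΩK _ (hinvj b hbΩ j); linarith
      have hj0 : (0 : ℝ) ≤ j := Nat.cast_nonneg j
      apply one_div_le_one_div_of_le (by positivity)
      nlinarith
    linarith
  have hbound : ∀ k : ℕ, c * ‖b - a‖ ≤ M * Real.exp (- (1 / (4 * K) * ∑ j ∈ Finset.range k, 1 / ((j : ℝ) + 1))) := by
    intro k
    have h1 := hM k
    have h2 : ∏ j ∈ Finset.range k, ‖F.derivative.eval (f^[j] b)‖ ≤
        ∏ j ∈ Finset.range k, (‖S j‖ * Real.exp (- (1 / (4 * K) * (1 / ((j : ℝ) + 1))))) := by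
      apply Finset.prod_le_prod
      · intros; exact norm_nonneg _
      · intro j _
        exact (hlocj j).2.2.trans (mul_le_mul_of_nonneg_left (hfac j) (norm_nonneg _))
    rw [Finset.prod_mul_distrib, ← Real.exp_sum, Finset.sum_neg_distrib, ← Finset.mul_sum] at h2
    have h3 := h1.trans (mul_le_mul_of_nonneg_left h2 hM0)
    rw [hxk] at h3
    have h4 := hprodS k
    refine le_of_mul_le_mul_right ?_ h4
    nlinarith
  have hlim : Tendsto (fun k : ℕ => M * Real.exp (- (1 / (4 * K) * ∑ j ∈ Finset.range k, 1 / ((j : ℝ) + 1)))) atTop (𝓝 (M * 0)) := by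
    refine Tendsto.const_mul M ?_
    refine Real.tendsto_exp_neg_atTop_nhds_zero.comp ?_
    refine Tendsto.const_mul_atTop (by positivity) ?_
    exact Real.tendsto_sum_range_one_div_nat_succ_atTop
  have hfin := ge_of_tendsto' hlim hbound
  have := mul_pos hc0 (hxpos 0)
  simp only [Function.iterate_zero, id] at this
  linarith

/-- The polynomial with conjugated coefficients. -/
noncomputable def KS.bar (h : ℂ[X]) : ℂ[X] := h.map (starRingEnd ℂ)

lemma KS.bar_eval (h : ℂ[X]) (z : ℂ) :
    (KS.bar h).eval z = starRingEnd ℂ (h.eval (starRingEnd ℂ z)) := by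
  have := Polynomial.eval₂_at_apply (p := h) (starRingEnd ℂ) (starRingEnd ℂ z)
  rw [Complex.conj_conj] at this
  rw [KS.bar, eval_map, this]

lemma KS.bar_natDegree (h : ℂ[X]) : (KS.bar h).natDegree = h.natDegree :=
  natDegree_map _

lemma KS.Q_eval (h : ℂ[X]) (z : ℂ) :
    ((KS.bar h).comp h).eval z =
      starRingEnd ℂ (h.eval (starRingEnd ℂ (h.eval z))) := by
  rw [eval_comp, KS.bar_eval]

lemma KS.Q_deriv (h : ℂ[X]) (z : ℂ) :
    ((KS.bar h).comp h).derivative.eval z =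
      starRingEnd ℂ (h.derivative.eval (starRingEnd ℂ (h.eval z))) * h.derivative.eval z := by
  rw [derivative_comp, eval_mul, eval_comp, KS.bar, derivative_map, ← KS.bar, KS.bar_eval, mul_comm]

lemma KS.attract_crit (h : ℂ[X]) (hn : 2 ≤ h.natDegree) (a : ℂ)
    (ha : h.eval a = starRingEnd ℂ a) (hl : ‖h.derivative.eval a‖ ≤ 1) :
    ∃ c, h.derivative.eval c = 0 ∧
      Tendsto (fun j => (fun x => ((KS.bar h).comp h).eval x)^[j] c) atTop (𝓝 a) := by
  set Q := (KS.bar h).comp h with hQ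
  have hQd : 2 ≤ Q.natDegree := by
    rw [hQ, natDegree_comp, KS.bar_natDegree]; nlinarith
  have hQa : Q.eval a = a := by rw [hQ, KS.Q_eval, ha]; simp [ha]
  have hQ' : Q.derivative.eval a = ((‖h.derivative.eval a‖ ^ 2 : ℝ) : ℂ) := by
    rw [hQ, KS.Q_deriv, ha, Complex.conj_conj, ← Complex.normSq_eq_conj_mul_self,
      Complex.normSq_eq_norm_sq]
  have main : ∃ c, Q.derivative.eval c = 0 ∧
      Tendsto (fun j => (fun x => Q.eval x)^[j] c) atTop (𝓝 a) := by
    rcases hl.lt_or_eq with h1 | h1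
    · refine KS.attr Q hQd a hQa ?_
      rw [hQ', Complex.norm_real, Real.norm_of_nonneg (by positivity)]
      exact pow_lt_one₀ (norm_nonneg _) h1 two_ne_zero
    · refine KS.para Q hQd a hQa ?_
      rw [hQ', h1]; simp
  obtain ⟨c, hc, hct⟩ := main
  rw [hQ, KS.Q_deriv, mul_eq_zero] at hc
  rcases hc with hc | hc
  · refine ⟨starRingEnd ℂ (h.eval c), by simpa using hc, ?_⟩
    have hcomm : ∀ j, (fun x => Q.eval x)^[j] (starRingEnd ℂ (h.eval c)) =
        starRingEnd ℂ (h.eval ((fun x => Q.eval x)^[j] c)) := by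
      intro j
      induction j with
      | zero => simp
      | succ j ih =>
        rw [Function.iterate_succ_apply', Function.iterate_succ_apply', ih]
        simp only [hQ, KS.Q_eval]
    simp_rw [hcomm]
    have hcont : Continuous fun z : ℂ => starRingEnd ℂ (h.eval z) :=
      Complex.continuous_conj.comp h.continuous
    have := (hcont.tendsto a).comp hct
    rw [ha, Complex.conj_conj] at this
    exact this
  · exact ⟨c, hc, hct⟩

lemma KS.nonrep_card (h : ℂ[X]) (hn : 2 ≤ h.natDegree) (S : Finset ℂ)
    (hS : ∀ a ∈ S, h.eval a = starRingEnd ℂ a ∧ ‖h.derivative.eval a‖ ≤ 1) :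
    S.card ≤ h.natDegree - 1 := by
  classical
  have hd0 : h.derivative ≠ 0 := by
    intro h0
    have := natDegree_eq_zero_of_derivative_eq_zero h0
    omega
  have H : ∀ a : S, ∃ c, h.derivative.eval c = 0 ∧
      Tendsto (fun j => (fun x => ((KS.bar h).comp h).eval x)^[j] c) atTop (𝓝 a.1) :=
    fun a => KS.attract_crit h hn a.1 (hS a.1 a.2).1 (hS a.1 a.2).2
  choose g hg1 hg2 using H
  have hinj : Function.Injective g := by
    intro a b hab
    have h1 := hg2 a
    rw [hab] at h1
    exact Subtype.ext (tendsto_nhds_unique h1 (hg2 b))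
  have h1 : (Finset.univ.image g).card = S.card := by
    rw [Finset.card_image_of_injective _ hinj]; simp
  have h2 : Finset.univ.image g ⊆ h.derivative.roots.toFinset := by
    intro c hc
    obtain ⟨a, -, rfl⟩ := Finset.mem_image.1 hc
    rw [Multiset.mem_toFinset, mem_roots hd0]
    exact hg1 a
  rw [← h1]
  calc _ ≤ _ := Finset.card_le_card h2
    _ ≤ _ := Multiset.toFinset_card_le _
    _ ≤ _ := card_roots' _
    _ ≤ _ := natDegree_derivative_le h


lemma KS.lin {E : Type} [AddCommGroup E] [Module ℂ E] [FiniteDimensional ℂ E]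
    (J : E →ₛₗ[starRingEnd ℂ] Module.Dual ℂ E) (hJ : Function.Injective J)
    (V W : Submodule ℂ E)
    (hV : ∀ p ∈ V, p ∈ W → ∀ v ∈ V, J p v = 0) (hW : ∀ p ∈ W, ∀ w ∈ W, J p w = 0) :
    Module.finrank ℂ V + Module.finrank ℂ W ≤ Module.finrank ℂ E := by
  have h1 := Submodule.finrank_sup_add_finrank_inf_eq V W
  have h2 := Subspace.finrank_add_finrank_dualAnnihilator_eq (V ⊔ W)
  have h3 : Module.finrank ℂ (Submodule.map J (V ⊓ W)) = Module.finrank ℂ (V ⊓ W : Submodule ℂ E) := by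
    have e := Submodule.equivMapOfInjective J hJ (V ⊓ W)
    have := rank_eq_of_equiv_equiv (starRingEnd ℂ) e.toAddEquiv (star_involutive.bijective)
      (fun r m => e.map_smulₛₗ r m)
    simp only [Module.finrank, this]
  have h4 : Submodule.map J (V ⊓ W) ≤ (V ⊔ W).dualAnnihilator := by
    rintro _ ⟨p, ⟨hpV, hpW⟩, rfl⟩
    rw [Submodule.mem_dualAnnihilator]
    intro x hx
    obtain ⟨v, hv, w, hw, rfl⟩ := Submodule.mem_sup.1 hx
    rw [map_add, hV p hpV hpW v hv, hW p hpW w hw, add_zero]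
  have h5 := Submodule.finrank_mono h4
  omega

lemma KS.linIndep_of_natDegree {ι : Type} (g : ι → ℂ[X]) (h0 : ∀ i, g i ≠ 0)
    (hinj : Function.Injective fun i => (g i).natDegree) : LinearIndependent ℂ g := by
  rw [linearIndependent_iff']
  intro s c hc i hi
  by_contra hci
  have hd : ∀ i, c i ≠ 0 → (c i • g i).degree = (g i).natDegree := by
    intro i h
    rw [smul_eq_C_mul, degree_C_mul h, degree_eq_natDegree (h0 i)]
  have h1 := degree_sum_eq_of_disjoint (fun i => c i • g i) s (by
    rintro j ⟨-, hj⟩ k ⟨-, hk⟩ hjk heq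
    have hj' : c j ≠ 0 := fun h => hj (by simp [h])
    have hk' : c k ≠ 0 := fun h => hk (by simp [h])
    simp only [Function.comp_apply, hd j hj', hd k hk'] at heq
    exact hjk (hinj (by exact_mod_cast heq)))
  rw [hc, degree_zero] at h1
  have h2 := Finset.le_sup (f := fun i => (c i • g i).degree) hi
  rw [← h1, hd i hci] at h2
  simp at h2

lemma KS.sub_dvd_comp (p q r : ℂ[X]) : q - r ∣ p.comp q - p.comp r := by
  have := sub_dvd_eval_sub q r (p.map C)
  rwa [eval_map, eval_map] at this

lemma KS.res (P T g : ℂ[X]) (S : Finset ℂ) (hT : T.Monic)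
    (hP : P = (∏ ζ ∈ S, (X - C ζ)) * T) (hg : T ∣ g)
    (hT0 : ∀ ζ ∈ S, P.derivative.eval ζ ≠ 0) :
    (g %ₘ P).coeff (P.natDegree - 1) = ∑ ζ ∈ S, g.eval ζ / P.derivative.eval ζ := by
  classical
  obtain ⟨k, rfl⟩ := hg
  set R : ℂ[X] := ∏ ζ ∈ S, (X - C ζ) with hR
  have hRm : R.Monic := monic_prod_of_monic _ _ fun ζ _ => monic_X_sub_C ζ
  have hPm : P.Monic := hP ▸ hRm.mul hT
  have hRd : R.natDegree = S.card := by
    rw [hR, natDegree_prod_of_monic _ _ fun ζ _ => monic_X_sub_C ζ]; simp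
  have hPd : P.natDegree = S.card + T.natDegree := by
    rw [hP, hRm.natDegree_mul hT, hRd]
  have hmod : (T * k) %ₘ P = T * (k %ₘ R) := by
    refine (div_modByMonic_unique (k /ₘ R) (T * (k %ₘ R)) hPm ⟨?_, ?_⟩).2
    · conv_rhs => rw [← modByMonic_add_div k R]
      rw [hP]; ring
    · rw [hP, mul_comm R T, degree_mul, degree_mul]
      have h1 := degree_modByMonic_lt k hRm
      rw [degree_eq_natDegree hT.ne_zero]
      exact WithBot.add_lt_add_left (by simp) h1
  rcases S.eq_empty_or_nonempty with hS | hS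
  · subst hS
    simp [hmod, hR]
  have hcard : 1 ≤ S.card := hS.card_pos
  have hdeg : (k %ₘ R).degree < S.card := by
    rw [← hRd, ← degree_eq_natDegree hRm.ne_zero]; exact degree_modByMonic_lt k hRm
  have hnd : (k %ₘ R).natDegree ≤ S.card - 1 := by
    have : (k %ₘ R).natDegree < S.card := by
      rw [← hRd]
      refine natDegree_modByMonic_lt k hRm ?_
      intro h1
      rw [h1] at hRd; simp at hRd; omega
    omega
  rw [hmod, hPd, show S.card + T.natDegree - 1 = T.natDegree + (S.card - 1) by omega,
    coeff_mul_add_eq_of_natDegree_le le_rfl hnd, coeff_natDegree, hT.leadingCoeff, one_mul,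
    Lagrange.coeff_eq_sum (v := id) Function.injective_id.injOn hdeg]
  refine Finset.sum_congr rfl fun ζ hζ => ?_
  have hRζ : R.eval ζ = 0 := by
    rw [hR, eval_prod]; exact Finset.prod_eq_zero hζ (by simp)
  have hk : (k %ₘ R).eval ζ = k.eval ζ := by
    conv_rhs => rw [← modByMonic_add_div k R]
    simp [hRζ]
  have hR' : R.derivative.eval ζ = ∏ j ∈ S.erase ζ, (ζ - j) := by
    have : R = Lagrange.nodal S id := by simp [hR, Lagrange.nodal]
    rw [this]
    have := Lagrange.eval_nodal_derivative_eval_node_eq (v := (id : ℂ → ℂ)) hζ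
    simp only [id] at this
    rw [this, Lagrange.eval_nodal]; rfl
  have hP' : P.derivative.eval ζ = (∏ j ∈ S.erase ζ, (ζ - j)) * T.eval ζ := by
    rw [hP, derivative_mul]; simp [hRζ, hR']
  have h0 := hT0 ζ hζ
  rw [hP'] at h0 ⊢
  simp only [id, hk, eval_mul]
  have h1 := left_ne_zero_of_mul h0
  have h2 := right_ne_zero_of_mul h0
  field_simp

noncomputable def KS.sg (h : ℂ[X]) : ℂ[X] →+* ℂ[X] :=
  (compRingHom h).comp (mapRingHom (starRingEnd ℂ))

lemma KS.sg_apply (h p : ℂ[X]) : KS.sg h p = (KS.bar p).comp h := rfl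

lemma KS.sg_X (h : ℂ[X]) : KS.sg h X = h := by simp [KS.sg]

lemma KS.sg_C (h : ℂ[X]) (c : ℂ) : KS.sg h (C c) = C (starRingEnd ℂ c) := by simp [KS.sg]

lemma KS.sg_eval (h p : ℂ[X]) (z : ℂ) :
    (KS.sg h p).eval z = starRingEnd ℂ (p.eval (starRingEnd ℂ (h.eval z))) := by
  rw [KS.sg_apply, eval_comp, KS.bar_eval]

lemma KS.sg_sg (h p : ℂ[X]) : KS.sg h (KS.sg h p) = p.comp ((KS.bar h).comp h) := by
  rw [KS.sg_apply, KS.sg_apply, KS.bar, Polynomial.map_comp, KS.bar, Polynomial.map_map,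
    comp_assoc]
  congr 1
  have : (starRingEnd ℂ).comp (starRingEnd ℂ) = RingHom.id ℂ := by ext; simp
  rw [this, Polynomial.map_id]

/-- the polynomial whose roots are the fixed points of the doubled map -/
noncomputable def KS.PP (h : ℂ[X]) : ℂ[X] := (KS.bar h).comp h - X

lemma KS.PP_eq (h : ℂ[X]) : KS.PP h = KS.sg h h - X := rfl

lemma KS.dvd_sgsg (h p : ℂ[X]) : KS.PP h ∣ KS.sg h (KS.sg h p) - p := by
  have := KS.sub_dvd_comp p ((KS.bar h).comp h) X
  rwa [comp_X, ← KS.sg_sg] at this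

lemma KS.dvd_sg (h p : ℂ[X]) (hp : KS.PP h ∣ p) : KS.PP h ∣ KS.sg h p := by
  have h1 : KS.PP h ∣ KS.sg h (KS.PP h) := by
    have := KS.dvd_sgsg h h
    rwa [KS.PP_eq, map_sub, KS.sg_X, ← KS.PP_eq]
  exact h1.trans (map_dvd (KS.sg h) hp)

lemma KS.QQ_natDegree (h : ℂ[X]) : ((KS.bar h).comp h).natDegree = h.natDegree ^ 2 := by
  rw [natDegree_comp, KS.bar_natDegree, sq]

lemma KS.PP_natDegree (h : ℂ[X]) (hn : 2 ≤ h.natDegree) :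
    (KS.PP h).natDegree = h.natDegree ^ 2 := by
  rw [KS.PP, natDegree_sub_eq_left_of_natDegree_lt, KS.QQ_natDegree]
  rw [KS.QQ_natDegree, natDegree_X]; nlinarith

lemma KS.PP_ne_zero (h : ℂ[X]) (hn : 2 ≤ h.natDegree) : KS.PP h ≠ 0 := by
  intro h0
  have := KS.PP_natDegree h hn
  rw [h0, natDegree_zero] at this
  nlinarith

/-- normalized -/
noncomputable def KS.P1 (h : ℂ[X]) : ℂ[X] := KS.PP h * C (KS.PP h).leadingCoeff⁻¹

lemma KS.P1_monic (h : ℂ[X]) (hn : 2 ≤ h.natDegree) : (KS.P1 h).Monic :=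
  monic_mul_leadingCoeff_inv (KS.PP_ne_zero h hn)

lemma KS.P1_natDegree (h : ℂ[X]) (hn : 2 ≤ h.natDegree) :
    (KS.P1 h).natDegree = h.natDegree ^ 2 := by
  rw [KS.P1, natDegree_mul_leadingCoeff_inv _ (KS.PP_ne_zero h hn), KS.PP_natDegree h hn]

lemma KS.P1_dvd_iff (h : ℂ[X]) (hn : 2 ≤ h.natDegree) (g : ℂ[X]) :
    KS.P1 h ∣ g ↔ KS.PP h ∣ g := by
  have hu : IsUnit (C (KS.PP h).leadingCoeff⁻¹) :=
    isUnit_C.2 (IsUnit.mk0 _ (inv_ne_zero (leadingCoeff_ne_zero.2 (KS.PP_ne_zero h hn))))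
  rw [KS.P1, hu.mul_right_dvd]

/-- residue functional -/
noncomputable def KS.L (h : ℂ[X]) : ℂ[X] →ₗ[ℂ] ℂ :=
  (lcoeff ℂ (h.natDegree ^ 2 - 1)).comp (modByMonicHom (KS.P1 h))

lemma KS.L_apply (h g : ℂ[X]) :
    KS.L h g = (g %ₘ KS.P1 h).coeff (h.natDegree ^ 2 - 1) := rfl

lemma KS.L_congr (h : ℂ[X]) (hn : 2 ≤ h.natDegree) (f g : ℂ[X]) (hfg : KS.PP h ∣ f - g) :
    KS.L h f = KS.L h g := by
  rw [← sub_eq_zero, ← map_sub, KS.L_apply,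
    (modByMonic_eq_zero_iff_dvd (KS.P1_monic h hn)).2 ((KS.P1_dvd_iff h hn _).2 hfg), coeff_zero]

lemma KS.L_low (h : ℂ[X]) (hn : 2 ≤ h.natDegree) (g : ℂ[X]) (hg : g.natDegree < h.natDegree ^ 2) :
    KS.L h g = g.coeff (h.natDegree ^ 2 - 1) := by
  rw [KS.L_apply, (modByMonic_eq_self_iff (KS.P1_monic h hn)).2]
  rw [degree_eq_natDegree (KS.P1_monic h hn).ne_zero, KS.P1_natDegree h hn]
  exact lt_of_le_of_lt degree_le_natDegree (by exact_mod_cast hg)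

lemma KS.nondeg (h : ℂ[X]) (hn : 2 ≤ h.natDegree) (p : ℂ[X]) (hp : p.degree < (h.natDegree ^ 2 : ℕ))
    (hL : ∀ x : ℂ[X], x.degree < (h.natDegree ^ 2 : ℕ) → KS.L h (x * KS.sg h p) = 0) : p = 0 := by
  have hm := KS.P1_monic h hn
  set y := KS.sg h p %ₘ KS.P1 h with hy
  have hcong : KS.PP h ∣ KS.sg h p - y := by
    rw [← KS.P1_dvd_iff h hn, hy, modByMonic_eq_sub_mul_div]
    simp
  have hN : 0 < h.natDegree ^ 2 := by positivity
  have hyd : y.natDegree < h.natDegree ^ 2 := by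
    rw [← KS.P1_natDegree h hn]
    refine natDegree_modByMonic_lt _ hm ?_
    intro h1
    have := KS.P1_natDegree h hn
    rw [h1, natDegree_one] at this; omega
  have hy0 : y = 0 := by
    by_contra hy0
    have h1 := hL (X ^ (h.natDegree ^ 2 - 1 - y.natDegree)) (by
      rw [degree_X_pow]; exact_mod_cast (by omega))
    rw [KS.L_congr h hn _ (X ^ (h.natDegree ^ 2 - 1 - y.natDegree) * y)
      (by rw [← mul_sub]; exact hcong.mul_left _), KS.L_low h hn _ (by
        rw [natDegree_X_pow_mul _ hy0]; omega)] at h1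
    rw [coeff_X_pow_mul', if_pos (by omega),
      show h.natDegree ^ 2 - 1 - (h.natDegree ^ 2 - 1 - y.natDegree) = y.natDegree by omega] at h1
    exact hy0 (leadingCoeff_eq_zero.1 h1)
  rw [hy0, sub_zero] at hcong
  have h2 := (dvd_sub_right (KS.dvd_sg h _ hcong)).1 (KS.dvd_sgsg h p)
  refine eq_zero_of_dvd_of_degree_lt h2 ?_
  rwa [degree_eq_natDegree (KS.PP_ne_zero h hn), KS.PP_natDegree h hn]

lemma KS.L_zero (h : ℂ[X]) (hn : 2 ≤ h.natDegree) (j : ℕ) :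
    ∀ i, i + j ≤ 2 * h.natDegree - 3 → KS.L h (X ^ i * h ^ j) = 0 := by
  induction j using Nat.strong_induction_on with
  | _ j ih =>
  intro i hij
  set n := h.natDegree with hn'
  rcases lt_or_ge j n with hj | hj
  · have hd : (X ^ i * h ^ j).natDegree ≤ i + j * n :=
      natDegree_mul_le.trans (add_le_add (natDegree_X_pow_le i) natDegree_pow_le)
    have hb : i + j * n < n ^ 2 - 1 := by
      obtain ⟨m, hm⟩ := Nat.exists_eq_add_of_le hn
      rw [hm] at hij hj ⊢
      have : j ≤ m + 1 := by omega
      have h1 : i + j ≤ 2 * m + 1 := by omega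
      have h2 : j * (m + 1) ≤ (m + 1) * (m + 1) := Nat.mul_le_mul_right _ this
      have h3 : i + j * (2 + m) = (i + j) + j * (m + 1) := by ring
      have h4 : (2 + m) ^ 2 = (m+1)*(m+1) + 2 * m + 3 := by ring
      omega
    rw [KS.L_low h hn _ (by rw [← hn']; omega), ← hn']
    exact coeff_eq_zero_of_natDegree_lt (by omega)
  · have hα : (KS.bar h).coeff n ≠ 0 := by
      have : (KS.bar h).coeff n = (KS.bar h).leadingCoeff := by
        rw [leadingCoeff, KS.bar_natDegree]
      rw [this, leadingCoeff_ne_zero]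
      intro h0
      have := KS.bar_natDegree h
      rw [h0, natDegree_zero] at this; omega
    have hsum : KS.sg h h = (∑ l ∈ Finset.range n, C ((KS.bar h).coeff l) * h ^ l)
        + C ((KS.bar h).coeff n) * h ^ n := by
      rw [← Finset.sum_range_succ (fun l => C ((KS.bar h).coeff l) * h ^ l), KS.sg_apply, comp,
        eval₂_eq_sum_range, KS.bar_natDegree]
    have hcong : KS.L h (X ^ i * h ^ (j - n) * KS.sg h h) = KS.L h (X ^ i * h ^ (j - n) * X) := by
      refine KS.L_congr h hn _ _ ?_
      rw [← mul_sub, ← KS.PP_eq]; exact dvd_mul_left _ _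
    have hr : KS.L h (X ^ i * h ^ (j - n) * X) = 0 := by
      rw [show X ^ i * h ^ (j - n) * X = X ^ (i + 1) * h ^ (j - n) by ring]
      exact ih _ (by omega) _ (by omega)
    have hl : KS.L h (X ^ i * h ^ (j - n) * ∑ l ∈ Finset.range n, C ((KS.bar h).coeff l) * h ^ l) = 0 := by
      rw [Finset.mul_sum, map_sum]
      refine Finset.sum_eq_zero fun l hl => ?_
      rw [Finset.mem_range] at hl
      rw [show X ^ i * h ^ (j - n) * (C ((KS.bar h).coeff l) * h ^ l) =
        (KS.bar h).coeff l • (X ^ i * h ^ (j - n + l)) by rw [smul_eq_C_mul]; ring, map_smul,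
        ih _ (by omega) _ (by omega), smul_zero]
    rw [hsum, mul_add, map_add, hl, zero_add, hr,
      show X ^ i * h ^ (j - n) * (C ((KS.bar h).coeff n) * h ^ n) =
        (KS.bar h).coeff n • (X ^ i * (h ^ (j - n) * h ^ n)) by rw [smul_eq_C_mul]; ring,
      ← pow_add, Nat.sub_add_cancel hj, map_smul, smul_eq_mul, mul_eq_zero] at hcong
    exact hcong.resolve_left hα

lemma KS.L_W (h : ℂ[X]) (hn : 2 ≤ h.natDegree) (a b c d : ℕ) (hab : a + b ≤ h.natDegree - 2)
    (hcd : c + d ≤ h.natDegree - 2) :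
    KS.L h ((X ^ c * h ^ d) * KS.sg h (X ^ a * h ^ b)) = 0 := by
  rw [KS.L_congr h hn _ (X ^ (c + b) * h ^ (d + a)), KS.L_zero h hn _ _ (by omega)]
  rw [map_mul, map_pow, map_pow, KS.sg_X,
    show X ^ c * h ^ d * (h ^ a * KS.sg h h ^ b) - X ^ (c + b) * h ^ (d + a) =
      (X ^ c * h ^ (d + a)) * (KS.sg h h ^ b - X ^ b) by ring]
  exact (sub_dvd_pow_sub_pow _ _ _).mul_left _

lemma KS.inv_of_root (h : ℂ[X]) (z : ℂ) (hz : (KS.PP h).eval z = 0) :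
    starRingEnd ℂ (h.eval (starRingEnd ℂ (h.eval z))) = z := by
  rw [KS.PP, eval_sub, KS.Q_eval, eval_X, sub_eq_zero] at hz
  exact hz

lemma KS.root_of_inv (h : ℂ[X]) (z : ℂ)
    (hz : starRingEnd ℂ (h.eval (starRingEnd ℂ (h.eval z))) = z) : (KS.PP h).eval z = 0 := by
  rw [KS.PP, eval_sub, KS.Q_eval, eval_X, sub_eq_zero]
  exact hz

lemma KS.mult_le (h : ℂ[X]) (hn : 2 ≤ h.natDegree) (z : ℂ) (hz : (KS.PP h).eval z = 0) :
    (KS.PP h).rootMultiplicity z ≤ (KS.PP h).rootMultiplicity (starRingEnd ℂ (h.eval z)) := by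
  have hP0 := KS.PP_ne_zero h hn
  have hi := KS.inv_of_root h z hz
  set w := starRingEnd ℂ (h.eval z) with hw
  have hw0 : (KS.PP h).eval w = 0 := KS.root_of_inv h w (by rw [hi])
  have hhw : h.eval w = starRingEnd ℂ z := by rw [← hi]; simp
  rcases Nat.lt_or_ge 1 ((KS.PP h).rootMultiplicity z) with hm | hm
  · have hd := ((one_lt_rootMultiplicity_iff_isRoot hP0).1 hm).2
    rw [IsRoot, KS.PP, derivative_sub, eval_sub, KS.Q_deriv, derivative_X, eval_one,
      sub_eq_zero, ← hw] at hd
    have hd0 : h.derivative.eval w ≠ 0 := by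
      intro h0; rw [h0] at hd; simp at hd
    rw [le_rootMultiplicity_iff hP0]
    set m := (KS.PP h).rootMultiplicity z with hmdef
    have h1 : (X - C w) ^ m ∣ KS.sg h (KS.PP h) := by
      have h2 := map_dvd (KS.sg h) (pow_rootMultiplicity_dvd (KS.PP h) z)
      rw [map_pow, map_sub, KS.sg_X, KS.sg_C] at h2
      refine (pow_dvd_pow_of_dvd ?_ m).trans h2
      rw [dvd_iff_isRoot]
      simp [hhw]
    obtain ⟨G, hG⟩ := binomExpansion (h.map C) X (KS.PP h)
    have h3 : KS.sg h (KS.PP h) = KS.PP h * (h.derivative + G * KS.PP h) := by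
      have h4 : KS.sg h (KS.PP h) = h.comp (X + KS.PP h) - h := by
        conv_lhs => rw [KS.PP_eq]
        rw [map_sub, KS.sg_X, KS.sg_sg]
        congr 2
        rw [KS.PP]; ring
      have h5 : h.comp (X + KS.PP h) = eval (X + KS.PP h) (h.map C) := by rw [eval_map]; rfl
      have h6 : eval X (h.map C) = h := by rw [eval_map, eval₂_C_X]
      have h7 : eval X (derivative (h.map C)) = h.derivative := by
        rw [derivative_map, eval_map, eval₂_C_X]
      rw [h4, h5, hG, h6, h7]; ring
    rw [h3] at h1
    refine IsCoprime.dvd_of_dvd_mul_right (IsCoprime.pow_left ?_) h1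
    rw [(irreducible_X_sub_C w).coprime_iff_not_dvd, dvd_iff_isRoot]
    simpa [hw0] using hd0
  · refine hm.trans ?_
    exact (rootMultiplicity_pos hP0).2 hw0

lemma KS.mult_eq (h : ℂ[X]) (hn : 2 ≤ h.natDegree) (z : ℂ) (hz : (KS.PP h).eval z = 0) :
    (KS.PP h).rootMultiplicity (starRingEnd ℂ (h.eval z)) = (KS.PP h).rootMultiplicity z := by
  have hi := KS.inv_of_root h z hz
  refine le_antisymm ?_ (KS.mult_le h hn z hz)
  have := KS.mult_le h hn (starRingEnd ℂ (h.eval z)) (KS.root_of_inv h _ (by rw [hi]))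
  rwa [hi] at this

lemma KS.PP_deriv_real (h : ℂ[X]) (z : ℂ) (hz : h.eval z = starRingEnd ℂ z) :
    (KS.PP h).derivative.eval z = ((‖h.derivative.eval z‖ ^ 2 - 1 : ℝ) : ℂ) := by
  rw [KS.PP, derivative_sub, eval_sub, KS.Q_deriv, hz, Complex.conj_conj,
    ← Complex.normSq_eq_conj_mul_self, Complex.normSq_eq_norm_sq]
  simp

lemma KS.P1_deriv (h : ℂ[X]) (z : ℂ) :
    (KS.P1 h).derivative.eval z = (KS.PP h).derivative.eval z * (KS.PP h).leadingCoeff⁻¹ := by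
  rw [KS.P1, derivative_mul]; simp

lemma KS.P1_fact (h : ℂ[X]) (hn : 2 ≤ h.natDegree) :
    KS.P1 h = ∏ ζ ∈ (KS.PP h).roots.toFinset, (X - C ζ) ^ (KS.PP h).rootMultiplicity ζ := by
  classical
  have h1 := (IsAlgClosed.splits (KS.PP h)).eq_prod_roots
  have h2 : C (KS.PP h).leadingCoeff * C (KS.PP h).leadingCoeff⁻¹ = 1 := by
    rw [← C_mul, mul_inv_cancel₀ (leadingCoeff_ne_zero.2 (KS.PP_ne_zero h hn)), C_1]
  rw [KS.P1]
  conv_lhs => rw [h1]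
  rw [leadingCoeff_mul, leadingCoeff_C, Monic.leadingCoeff (p := (Multiset.map _ _).prod), mul_one]
  · rw [mul_right_comm, h2, one_mul, prod_multiset_root_eq_finset_root]
  · exact monic_multiset_prod_of_monic _ _ fun a _ => monic_X_sub_C a

lemma KS.exM (h : ℂ[X]) (hn : 2 ≤ h.natDegree) (S K : Finset ℂ)
    (hS : ∀ ζ ∈ S, h.eval ζ = starRingEnd ℂ ζ ∧ 1 < ‖h.derivative.eval ζ‖)
    (hSK : ∀ ζ, h.eval ζ = starRingEnd ℂ ζ → ζ ∈ S ∨ ζ ∈ K) :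
    ∃ T M : ℂ[X], T.Monic ∧ M.Monic ∧ KS.P1 h = (∏ ζ ∈ S, (X - C ζ)) * T ∧
      T ∣ M * KS.sg h M ∧ 2 * M.natDegree ≤ T.natDegree + K.card := by
  classical
  have hP0 := KS.PP_ne_zero h hn
  set f : ℂ → ℂ := fun z => starRingEnd ℂ (h.eval z) with hf
  set m : ℂ → ℕ := fun z => (KS.PP h).rootMultiplicity z with hm
  have hSf : ∀ ζ ∈ S, f ζ = ζ := fun ζ hζ => by simp [hf, (hS ζ hζ).1]
  set B := (KS.PP h).roots.toFinset with hB
  have hBmem : ∀ ζ, ζ ∈ B ↔ (KS.PP h).eval ζ = 0 := fun ζ => by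
    rw [hB, Multiset.mem_toFinset, mem_roots hP0]; rfl
  have hSB : S ⊆ B := fun ζ hζ => by
    rw [hBmem]; refine KS.root_of_inv h ζ ?_
    have := hSf ζ hζ
    simp only [hf] at this
    rw [this, this]
  have hSm : ∀ ζ ∈ S, m ζ = 1 := by
    intro ζ hζ
    have h1 : 0 < m ζ := (rootMultiplicity_pos hP0).2 ((hBmem ζ).1 (hSB hζ))
    have h2 : ¬ 1 < m ζ := by
      intro h3
      have h4 := ((one_lt_rootMultiplicity_iff_isRoot hP0).1 h3).2
      rw [IsRoot, KS.PP_deriv_real h ζ (hS ζ hζ).1] at h4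
      have h5 : ‖h.derivative.eval ζ‖ ^ 2 - 1 = 0 := by exact_mod_cast h4
      have := (hS ζ hζ).2
      nlinarith
    omega
  set A := B \ S with hA
  have hff : ∀ ζ ∈ B, f (f ζ) = ζ := fun ζ hζ => KS.inv_of_root h ζ ((hBmem ζ).1 hζ)
  have hAB : ∀ ζ ∈ A, ζ ∈ B := fun ζ hζ => (Finset.mem_sdiff.1 hζ).1
  have hfB : ∀ ζ ∈ B, f ζ ∈ B := fun ζ hζ => by
    rw [hBmem]
    refine KS.root_of_inv h _ ?_
    exact congrArg f (hff ζ hζ)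
  have hfA : ∀ ζ ∈ A, f ζ ∈ A := fun ζ hζ => by
    rw [hA, Finset.mem_sdiff]
    refine ⟨hfB ζ (hAB ζ hζ), fun h1 => (Finset.mem_sdiff.1 hζ).2 ?_⟩
    have h2 := hSf _ h1
    rw [hff ζ (hAB ζ hζ)] at h2
    rwa [h2]
  have hmf : ∀ ζ ∈ A, m (f ζ) = m ζ := fun ζ hζ =>
    KS.mult_eq h hn ζ ((hBmem ζ).1 (hAB ζ hζ))
  obtain ⟨r, hr⟩ : ∃ r : ℂ → ℂ → Prop, ∀ a b, a ≠ b → (r a b ↔ ¬ r b a) := by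
    refine ⟨WellOrderingRel, fun a b hab => ⟨fun h1 h2 => ?_, fun h1 => ?_⟩⟩
    · exact asymm_of WellOrderingRel h1 h2
    · rcases trichotomous_of WellOrderingRel a b with h2 | h2 | h2
      · exact h2
      · exact absurd h2 hab
      · exact absurd h2 h1
  set e : ℂ → ℕ := fun ζ => if f ζ = ζ then (m ζ + 1) / 2 else if r ζ (f ζ) then m ζ else 0 with he
  have hsum : ∀ ζ ∈ A, m ζ ≤ e ζ + e (f ζ) ∧ e ζ + e (f ζ) ≤ m ζ + if f ζ = ζ then 1 else 0 := by
    intro ζ hζ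
    by_cases h1 : f ζ = ζ
    · simp only [he, h1, if_true]; omega
    · have h2 := hr (f ζ) ζ h1
      have h3 := hff ζ (hAB ζ hζ)
      have h4 := hmf ζ hζ
      simp only [he, h3, if_neg h1, if_neg (Ne.symm h1), h4]
      by_cases h5 : r ζ (f ζ)
      · have h6 : ¬ r (f ζ) ζ := fun h7 => h2.1 h7 h5
        simp [h5, h6]
      · simp [h5, h2.2 h5]
  refine ⟨∏ ζ ∈ A, (X - C ζ) ^ m ζ, ∏ ζ ∈ A, (X - C ζ) ^ e ζ,
    monic_prod_of_monic _ _ fun ζ _ => (monic_X_sub_C ζ).pow _,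
    monic_prod_of_monic _ _ fun ζ _ => (monic_X_sub_C ζ).pow _, ?_, ?_, ?_⟩
  · rw [KS.P1_fact h hn, ← hB, ← Finset.prod_sdiff hSB, ← hA, mul_comm]
    congr 1
    exact Finset.prod_congr rfl fun ζ hζ => by
      have := hSm ζ hζ
      simp only [hm] at this
      rw [this, pow_one]
  · refine Finset.prod_dvd_of_coprime ?_ ?_
    · intro a _ b _ hab
      exact (isCoprime_X_sub_C_of_isUnit_sub (sub_ne_zero.2 hab).isUnit).pow
    · intro ζ hζ
      refine (pow_dvd_pow _ (hsum ζ hζ).1).trans ?_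
      rw [pow_add]
      refine mul_dvd_mul (Finset.dvd_prod_of_mem (fun ζ => (X - C ζ) ^ e ζ) hζ) ?_
      rw [map_prod]
      refine Dvd.dvd.trans ?_ (Finset.dvd_prod_of_mem _ (hfA ζ hζ))
      rw [map_pow, map_sub, KS.sg_X, KS.sg_C]
      refine pow_dvd_pow_of_dvd ?_ _
      rw [dvd_iff_isRoot]
      simp [hf]
  · rw [natDegree_prod_of_monic _ _ fun ζ _ => (monic_X_sub_C ζ).pow _,
      natDegree_prod_of_monic _ _ fun ζ _ => (monic_X_sub_C ζ).pow _]
    simp only [natDegree_pow, natDegree_X_sub_C, mul_one]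
    have h1 : ∑ ζ ∈ A, e (f ζ) = ∑ ζ ∈ A, e ζ :=
      Finset.sum_nbij' f f hfA hfA (fun ζ hζ => hff ζ (hAB ζ hζ)) (fun ζ hζ => hff ζ (hAB ζ hζ))
        (fun ζ hζ => rfl)
    have h2 := Finset.sum_le_sum fun ζ hζ => (hsum ζ hζ).2
    rw [Finset.sum_add_distrib, Finset.sum_add_distrib, h1, Finset.sum_boole] at h2
    have h3 : (A.filter fun ζ => f ζ = ζ).card ≤ K.card := by
      refine Finset.card_le_card fun ζ hζ => ?_
      rw [Finset.mem_filter] at hζ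
      refine (hSK ζ ?_).resolve_left (Finset.mem_sdiff.1 hζ.1).2
      rw [← hζ.2]
      simp only [hf, Complex.conj_conj]
      have := hζ.2
      simp only [hf] at this
      rw [this]
    simp only [Nat.cast_id] at h2
    omega

lemma KS.degreeLT_finrank (N : ℕ) : Module.finrank ℂ (degreeLT ℂ N) = N := by
  rw [(degreeLTEquiv ℂ N).finrank_eq, Module.finrank_fin_fun]

lemma KS.sg_smul (h p : ℂ[X]) (c : ℂ) : KS.sg h (c • p) = (starRingEnd ℂ c) • KS.sg h p := by
  rw [smul_eq_C_mul, map_mul, KS.sg_C, ← smul_eq_C_mul]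

noncomputable def KS.J (h : ℂ[X]) (N : ℕ) :
    degreeLT ℂ N →ₛₗ[starRingEnd ℂ] Module.Dual ℂ (degreeLT ℂ N) where
  toFun p := (KS.L h).comp ((LinearMap.mulRight ℂ (KS.sg h p.1)).comp (Submodule.subtype _))
  map_add' p q := by
    ext x
    simp [mul_add]
  map_smul' c p := by
    ext x
    simp [KS.sg_smul]

lemma KS.J_apply (h : ℂ[X]) (N : ℕ) (p x : degreeLT ℂ N) :
    KS.J h N p x = KS.L h (x.1 * KS.sg h p.1) := rfl

noncomputable def KS.Wg (h : ℂ[X]) (n : ℕ) (i : Σ k : Fin (n - 1), Fin (k.1 + 1)) : ℂ[X] :=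
  X ^ (i.1.1 - i.2.1) * h ^ i.2.1

lemma KS.Wcard (n : ℕ) : Fintype.card (Σ k : Fin (n - 1), Fin (k.1 + 1)) * 2 = n * (n - 1) := by
  rw [Fintype.card_sigma]
  simp only [Fintype.card_fin]
  rw [Fin.sum_univ_eq_sum_range (fun k => k + 1) (n - 1)]
  rcases n with _ | n
  · simp
  · have := Finset.sum_range_id_mul_two (n + 1)
    rw [Finset.sum_range_succ'] at this
    simpa using this

lemma KS.Wg_natDegree (h : ℂ[X]) (hn : 2 ≤ h.natDegree) (i) :
    (KS.Wg h h.natDegree i).natDegree = (i.1.1 - i.2.1) + i.2.1 * h.natDegree := by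
  have h0 : h ≠ 0 := by rintro rfl; simp at hn
  rw [KS.Wg, natDegree_X_pow_mul _ (pow_ne_zero _ h0), natDegree_pow]; ring

lemma KS.Wg_indep (h : ℂ[X]) (hn : 2 ≤ h.natDegree) :
    LinearIndependent ℂ (KS.Wg h h.natDegree) := by
  have h0 : h ≠ 0 := by rintro rfl; simp at hn
  refine KS.linIndep_of_natDegree _ (fun i => ?_) ?_
  · exact mul_ne_zero (pow_ne_zero _ X_ne_zero) (pow_ne_zero _ h0)
  · intro i j hij
    simp only [KS.Wg_natDegree h hn] at hij
    obtain ⟨⟨a, ha⟩, ⟨b, hb⟩⟩ := i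
    obtain ⟨⟨c, hc⟩, ⟨d, hd⟩⟩ := j
    simp only at hij hb hd
    have hbd : b = d := by
      have h1 := congrArg (· / h.natDegree) hij
      rwa [Nat.add_mul_div_right _ _ (by omega), Nat.add_mul_div_right _ _ (by omega),
        Nat.div_eq_of_lt (by omega), Nat.div_eq_of_lt (by omega), zero_add, zero_add] at h1
    subst hbd
    have hac : a = c := by omega
    subst hac
    rfl

lemma KS.rep_card (h : ℂ[X]) (hn : 2 ≤ h.natDegree) (S K : Finset ℂ)
    (hS : ∀ ζ ∈ S, h.eval ζ = starRingEnd ℂ ζ ∧ 1 < ‖h.derivative.eval ζ‖)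
    (hSK : ∀ ζ, h.eval ζ = starRingEnd ℂ ζ → ζ ∈ S ∨ ζ ∈ K) :
    S.card ≤ h.natDegree + K.card := by
  classical
  obtain ⟨T, M, hT, hM, hP1, hTM, hdeg⟩ := KS.exM h hn S K hS hSK
  set N := h.natDegree ^ 2 with hN
  set V0 : Submodule ℂ ℂ[X] := (degreeLT ℂ (N - M.natDegree)).map (LinearMap.mulLeft ℂ M) with hV0
  set W0 : Submodule ℂ ℂ[X] := Submodule.span ℂ (Set.range (KS.Wg h h.natDegree)) with hW0
  have hV0E : V0 ≤ degreeLT ℂ N := by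
    rintro _ ⟨u, hu, rfl⟩
    rw [LinearMap.mulLeft_apply, mem_degreeLT]
    have hu' := mem_degreeLT.1 hu
    by_cases hu0 : u = 0
    · rw [hu0, mul_zero, degree_zero]; exact WithBot.bot_lt_coe _
    · rw [degree_eq_natDegree hu0] at hu'
      have h1 : u.natDegree < N - M.natDegree := by exact_mod_cast hu'
      rw [degree_eq_natDegree (mul_ne_zero hM.ne_zero hu0), natDegree_mul hM.ne_zero hu0]
      exact_mod_cast (by omega)
  have hW0E : W0 ≤ degreeLT ℂ N := by
    rw [hW0, Submodule.span_le]
    rintro _ ⟨i, rfl⟩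
    rw [SetLike.mem_coe, mem_degreeLT]
    refine lt_of_le_of_lt degree_le_natDegree ?_
    rw [KS.Wg_natDegree h hn]
    obtain ⟨⟨a, ha⟩, ⟨b, hb⟩⟩ := i
    simp only at hb ⊢
    have h1 : a - b + b * h.natDegree < N := by
      have h2 : b * h.natDegree ≤ (h.natDegree - 2) * h.natDegree :=
        Nat.mul_le_mul_right _ (by omega)
      have h3 : (h.natDegree - 2) * h.natDegree + 2 * h.natDegree = N := by
        rw [← add_mul, Nat.sub_add_cancel hn, hN, sq]
      omega
    exact_mod_cast h1
  have hV0r : Module.finrank ℂ V0 = N - M.natDegree := by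
    rw [hV0, ← (Submodule.equivMapOfInjective (LinearMap.mulLeft ℂ M)
      (mul_right_injective₀ hM.ne_zero) _).finrank_eq, KS.degreeLT_finrank]
  have hW0r : Module.finrank ℂ W0 * 2 = h.natDegree * (h.natDegree - 1) := by
    rw [hW0, finrank_span_eq_card (KS.Wg_indep h hn), KS.Wcard]
  have key : ∀ p ∈ W0, ∀ w ∈ W0, KS.L h (w * KS.sg h p) = 0 := by
    intro p hp w hw
    induction hp using Submodule.span_induction with
    | zero => simp
    | add x y _ _ hx hy => rw [map_add, mul_add, map_add, hx, hy, add_zero]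
    | smul c x _ hx =>
      rw [KS.sg_smul, mul_smul_comm, map_smul, hx, smul_zero]
    | mem x hx =>
      obtain ⟨i, rfl⟩ := hx
      induction hw using Submodule.span_induction with
      | zero => simp
      | add x y _ _ hx hy => rw [add_mul, map_add, hx, hy, add_zero]
      | smul c x _ hx => rw [smul_mul_assoc, map_smul, hx, smul_zero]
      | mem x hx =>
        obtain ⟨j, rfl⟩ := hx
        obtain ⟨⟨a, ha⟩, ⟨b, hb⟩⟩ := i
        obtain ⟨⟨c, hc⟩, ⟨d, hd⟩⟩ := j
        simp only at hb hd
        exact KS.L_W h hn _ _ _ _ (by simp only; omega) (by simp only; omega)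
  have hlin := KS.lin (KS.J h N) ?_ (V0.comap (degreeLT ℂ N).subtype)
    (W0.comap (degreeLT ℂ N).subtype) ?_ ?_
  · rw [(Submodule.comapSubtypeEquivOfLe hV0E).finrank_eq,
      (Submodule.comapSubtypeEquivOfLe hW0E).finrank_eq, hV0r, KS.degreeLT_finrank] at hlin
    have h1 : S.card + T.natDegree = N := by
      have h2 := KS.P1_natDegree h hn
      rw [hP1, (monic_prod_of_monic _ _ fun ζ _ => monic_X_sub_C ζ).natDegree_mul hT,
        natDegree_prod_of_monic _ _ fun ζ _ => monic_X_sub_C ζ] at h2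
      simpa using h2
    have h3 : h.natDegree * (h.natDegree - 1) + h.natDegree = N := by
      rw [hN, sq, ← Nat.mul_succ, Nat.succ_eq_add_one, Nat.sub_add_cancel (by omega)]
    omega
  · rw [injective_iff_map_eq_zero]
    intro p hp
    refine Subtype.ext (KS.nondeg h hn p.1 (mem_degreeLT.1 p.2) fun x hx => ?_)
    have := KS.J_apply h N p ⟨x, mem_degreeLT.2 hx⟩
    rw [hp] at this
    exact this.symm
  · -- the form on V
    have hlead : (KS.PP h).leadingCoeff ≠ 0 := leadingCoeff_ne_zero.2 (KS.PP_ne_zero h hn)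
    have hpos : ∀ ζ ∈ S, 0 < ‖h.derivative.eval ζ‖ ^ 2 - 1 := fun ζ hζ => by
      have := (hS ζ hζ).2; nlinarith
    have hform : ∀ v ∈ V0, ∀ p ∈ V0, KS.L h (v * KS.sg h p) = (KS.PP h).leadingCoeff *
        ∑ ζ ∈ S, v.eval ζ * starRingEnd ℂ (p.eval ζ) / ((‖h.derivative.eval ζ‖ ^ 2 - 1 : ℝ) : ℂ) := by
      rintro _ ⟨v, -, rfl⟩ _ ⟨p, -, rfl⟩
      rw [LinearMap.mulLeft_apply, LinearMap.mulLeft_apply, KS.L_apply, ← KS.P1_natDegree h hn,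
        KS.res (KS.P1 h) T _ S hT hP1, Finset.mul_sum]
      · refine Finset.sum_congr rfl fun ζ hζ => ?_
        rw [KS.P1_deriv, KS.PP_deriv_real h ζ (hS ζ hζ).1, eval_mul, KS.sg_eval, (hS ζ hζ).1,
          Complex.conj_conj]
        have : ((‖h.derivative.eval ζ‖ ^ 2 - 1 : ℝ) : ℂ) ≠ 0 := by
          exact_mod_cast (hpos ζ hζ).ne'
        field_simp
      · rw [map_mul, mul_mul_mul_comm]
        exact hTM.mul_right _
      · intro ζ hζ
        rw [KS.P1_deriv, KS.PP_deriv_real h ζ (hS ζ hζ).1]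
        refine mul_ne_zero ?_ (inv_ne_zero hlead)
        exact_mod_cast (hpos ζ hζ).ne'
    intro p hp hpW v hv
    have h0 := hform p.1 hp p.1 hp
    rw [key p.1 hpW p.1 hpW] at h0
    have h1 := (mul_eq_zero.1 h0.symm).resolve_left hlead
    have h2 : ∑ ζ ∈ S, ‖p.1.eval ζ‖ ^ 2 / (‖h.derivative.eval ζ‖ ^ 2 - 1) = 0 := by
      have h3 : ((∑ ζ ∈ S, ‖p.1.eval ζ‖ ^ 2 / (‖h.derivative.eval ζ‖ ^ 2 - 1) : ℝ) : ℂ) = 0 := by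
        rw [← h1, Complex.ofReal_sum]
        refine Finset.sum_congr rfl fun ζ _ => ?_
        rw [Complex.mul_conj, Complex.normSq_eq_norm_sq, Complex.ofReal_div]
      exact_mod_cast h3
    rw [Finset.sum_eq_zero_iff_of_nonneg fun ζ hζ => div_nonneg (sq_nonneg _) (hpos ζ hζ).le] at h2
    rw [KS.J_apply, hform v.1 hv p.1 hp, Finset.sum_eq_zero, mul_zero]
    intro ζ hζ
    have h4 := (div_eq_zero_iff.1 (h2 ζ hζ)).resolve_right (hpos ζ hζ).ne'
    have h5 : p.1.eval ζ = 0 := norm_eq_zero.1 (pow_eq_zero_iff two_ne_zero |>.1 h4)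
    rw [h5]; simp
  · intro p hp w hw
    rw [KS.J_apply]
    exact key _ hp _ hw

end KSaux

/-- Khavinson–Świątek: for a complex polynomial `h` of degree
`n ≥ 2`, the equation `conj z = h z` has at most `3 n - 2` solutions. -/
theorem stmt_15 (h : Polynomial ℂ) (n : ℕ) (hn : h.natDegree = n) (hn2 : 2 ≤ n) :
    {z : ℂ | h.eval z - starRingEnd ℂ z = 0}.Finite ∧
      {z : ℂ | h.eval z - starRingEnd ℂ z = 0}.ncard ≤ 3 * n - 2 := by
  classical
  subst hn
  have hfin : {z : ℂ | h.eval z - starRingEnd ℂ z = 0}.Finite := by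
    refine Set.Finite.subset (Polynomial.finite_setOf_isRoot (KS.PP_ne_zero h hn2)) ?_
    intro z hz
    have hz' : h.eval z = starRingEnd ℂ z := sub_eq_zero.1 hz
    refine KS.root_of_inv h z ?_
    simp [hz']
  refine ⟨hfin, ?_⟩
  rw [Set.ncard_eq_toFinset_card _ hfin]
  set F := hfin.toFinset with hF
  have hmem : ∀ z, z ∈ F ↔ h.eval z = starRingEnd ℂ z := fun z => by
    rw [hF, Set.Finite.mem_toFinset, Set.mem_setOf_eq, sub_eq_zero]
  have hK := KS.nonrep_card h hn2 (F.filter fun z => ‖h.derivative.eval z‖ ≤ 1) (fun a ha => by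
    rw [Finset.mem_filter, hmem] at ha
    exact ha)
  have hR := KS.rep_card h hn2 (F.filter fun z => ¬ ‖h.derivative.eval z‖ ≤ 1)
    (F.filter fun z => ‖h.derivative.eval z‖ ≤ 1) (fun a ha => by
      rw [Finset.mem_filter, hmem, not_le] at ha
      exact ha) (fun a ha => by
      rw [Finset.mem_filter, Finset.mem_filter, hmem]
      tauto)
  have hsum := Finset.card_filter_add_card_filter_not (s := F)
    (fun z => ‖h.derivative.eval z‖ ≤ 1)
  omega
end
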